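/- arXiv:2403.06270 — 5 statements merged into one kernel-verified Lean document; each statement's English description precedes it below -/
import Mathlib

section
/- Let f_1,…,f_ℓ, g ∈ k⟨x_1,…,x_d⟩. If for every n ≥ 1 and every tuple X ∈ M_n(k)^d with f_1(X) = … = f_ℓ(X) = 0 one also has g(X) = 0, then for every n ≥ 1 there exists r ≥ 1 such that g^r lies in the sum of the two-sided ideal of k⟨x_1,…,x_d⟩ generated by f_1,…,f_ℓ and the ideal PI_n of all polynomial identities of n×n matrices. -/
/-- Evaluation of a noncommutative polynomial `f ∈ k⟨x_1,…,x_d⟩` at a tuple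
`X` of `n × n` matrices: the image of `f` under the unique unital `k`-algebra
homomorphism sending `x_i` to `X i`. -/
noncomputable def ncEval {k : Type*} [CommSemiring k] {d n : ℕ}
    (X : Fin d → Matrix (Fin n) (Fin n) k) (f : FreeAlgebra k (Fin d)) :
    Matrix (Fin n) (Fin n) k :=
  FreeAlgebra.lift k X f

/-!
Write `A` for the quotient of `k⟨x_1,…,x_d⟩` by the ideal `(f_1,…,f_ℓ) + PI_n`. Alternating forms in
more than `n²` arguments vanish on `M_n(k)`, so `A`, and with it `A[X]`, satisfies a standard
identity. Suppose the image of `g` in `A` is not nilpotent. Then `1 - g X` has no left inverse in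
`A[X]`, hence `g` acts nontrivially on some simple `A[X]`-module `M`. For a maximal subfield `K` of
the division ring `End M`, Jacobson density over the `K`-algebra generated by the action would
realise shift operators violating the standard identity if `M` were infinite-dimensional over `K`.
So `A` acts on `M` by matrices over `K`. The entries of the matrices of the `x_i`, together with the
inverse of a nonzero entry of the matrix of `g`, generate a subalgebra of `K` that has a `k`-algebra
homomorphism to `k`. Applied entrywise, it produces a common zero of the `f_j` over `k` at which `g`
does not vanish.
-/

open Module Polynomial

universe u

/-- The standard polynomial `S_N = ∑ σ, sign σ • a_{σ 0} ⋯ a_{σ (N-1)}` evaluated at `a`. -/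
noncomputable def standardPolynomial {A : Type*} [Ring A] {N : ℕ} (a : Fin N → A) : A :=
  ∑ σ : Equiv.Perm (Fin N), Equiv.Perm.sign σ • (List.ofFn fun i => a (σ i)).prod

/-- The ring `A` satisfies the standard identity of degree `N`. This is the only form in which
polynomial identities enter the argument, and it makes no reference to a base ring. -/
def SatisfiesStandardIdentity (A : Type*) [Ring A] (N : ℕ) : Prop :=
  ∀ a : Fin N → A, standardPolynomial a = 0

section StandardPolynomial

variable {A B : Type*} [Ring A] [Ring B] {N : ℕ}

theorem standardPolynomial_eq_alternatization (K : Type*) [CommRing K] [Algebra K A]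
    (a : Fin N → A) :
    standardPolynomial a =
      MultilinearMap.alternatization (MultilinearMap.mkPiAlgebraFin K N A) a := by
  simp [standardPolynomial, MultilinearMap.alternatization_apply]

theorem map_standardPolynomial (φ : A →+* B) (a : Fin N → A) :
    φ (standardPolynomial a) = standardPolynomial fun i => φ (a i) := by
  simp only [standardPolynomial, map_sum, Units.smul_def, map_zsmul, map_list_prod,
    List.map_ofFn, Function.comp_def]

namespace SatisfiesStandardIdentity

theorem of_finrank_lt (K : Type*) [Field K] [Algebra K A] [Module.Finite K A]
    (hN : finrank K A < N) : SatisfiesStandardIdentity A N := by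
  intro a
  rw [standardPolynomial_eq_alternatization K]
  refine AlternatingMap.map_linearDependent _ _ fun h => hN.not_ge ?_
  simpa using h.fintype_card_le_finrank

theorem of_injective (hB : SatisfiesStandardIdentity B N) {φ : A →+* B}
    (hφ : Function.Injective φ) : SatisfiesStandardIdentity A N := fun a =>
  hφ (by rw [map_standardPolynomial, hB, map_zero])

theorem standardPolynomial_eq_zero_of_mem_span_range (hA : SatisfiesStandardIdentity A N)
    (K : Type*) [CommRing K] [Algebra K B] (φ : A →+* B) {b : Fin N → B}
    (hb : ∀ i, b i ∈ Submodule.span K (Set.range φ)) : standardPolynomial b = 0 := by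
  classical
  simp only [Finsupp.mem_span_range_iff_exists_finsupp] at hb
  choose c hc using hb
  obtain rfl : (fun i => (c i).sum fun a r => r • φ a) = b := funext hc
  rw [standardPolynomial_eq_alternatization K, ← AlternatingMap.coe_multilinearMap]
  simp only [Finsupp.sum, MultilinearMap.map_sum_finset]
  refine Finset.sum_eq_zero fun a _ => ?_
  rw [MultilinearMap.map_smul_univ, AlternatingMap.coe_multilinearMap,
    ← standardPolynomial_eq_alternatization, ← map_standardPolynomial, hA, map_zero, smul_zero]

theorem adjoin_range (hA : SatisfiesStandardIdentity A N) (K : Type*) [CommRing K] [Algebra K B]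
    (φ : A →+* B) : SatisfiesStandardIdentity (Algebra.adjoin K (Set.range φ)) N := by
  intro b
  apply Subtype.val_injective
  have hclosure : Submonoid.closure (Set.range φ) = MonoidHom.mrange (φ : A →* B) :=
    (MonoidHom.mrange (φ : A →* B)).closure_eq
  refine (map_standardPolynomial (Algebra.adjoin K (Set.range φ)).val.toRingHom b).trans
    (hA.standardPolynomial_eq_zero_of_mem_span_range K φ fun i => ?_)
  have hbi := (b i).2
  rwa [← Subalgebra.mem_toSubmodule, Algebra.adjoin_eq_span, hclosure] at hbi

theorem polynomial (hA : SatisfiesStandardIdentity A N) : SatisfiesStandardIdentity A[X] N := by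
  let Z := Subring.center A[X]
  have hX : (X : A[X]) ∈ Z := Subring.mem_center_iff.2 fun p => (X_mul (p := p)).symm
  have htop : Algebra.adjoin Z (Set.range (C : A →+* A[X])) = ⊤ := by
    refine Algebra.eq_top_iff.2 fun p => ?_
    induction p using Polynomial.induction_on' with
    | add p q hp hq => exact add_mem hp hq
    | monomial n a =>
      rw [← C_mul_X_pow_eq_monomial]
      exact mul_mem (Algebra.subset_adjoin ⟨a, rfl⟩)
        (pow_mem (Subalgebra.algebraMap_mem _ (⟨X, hX⟩ : Z)) n)
  have h := hA.adjoin_range Z C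
  rw [htop] at h
  exact h.of_injective (φ := (Subalgebra.topEquiv (R := Z)).symm.toRingEquiv.toRingHom)
    (Subalgebra.topEquiv (R := Z)).symm.injective

end SatisfiesStandardIdentity

end StandardPolynomial

section Kaplansky

theorem list_prod_map_shift_apply {K M : Type*} [Semiring K] [AddCommMonoid M] [Module K M] {N : ℕ}
    {w : ℕ → M} {r : Fin N → Module.End K M}
    (hr : ∀ (i : Fin N) (j : ℕ), j ≤ N → r i (w j) = if j = i + 1 then w i else 0)
    (l : List (Fin N)) (c : ℕ) (hc : c + l.length ≤ N) :
    (l.map r).prod (w (c + l.length)) =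
      if l.map Fin.val = List.range' c l.length then w c else 0 := by
  induction l generalizing c with
  | nil => simp
  | cons i l ih =>
    simp only [List.length_cons] at hc
    simp only [List.map_cons, List.prod_cons, List.length_cons, List.range'_succ,
      Module.End.mul_apply, List.cons.injEq, ← add_assoc]
    rw [add_right_comm, ih (c + 1) (by lia), apply_ite (r i), map_zero, hr i _ (by lia)]
    split_ifs <;> grind

-- Only the identity permutation composes the shifts in the order that carries `w N` to `w 0`.
theorem standardPolynomial_shift_apply {K M : Type*} [Ring K] [AddCommGroup M] [Module K M] {N : ℕ}
    {w : ℕ → M} {r : Fin N → Module.End K M}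
    (hr : ∀ (i : Fin N) (j : ℕ), j ≤ N → r i (w j) = if j = i + 1 then w i else 0) :
    standardPolynomial r (w N) = w 0 := by
  have hperm (σ : Equiv.Perm (Fin N)) : (List.ofFn fun i => r (σ i)).prod (w N) =
      if σ = 1 then w 0 else 0 := by
    have hrange : (List.ofFn σ).map Fin.val = List.range' 0 N ↔ σ = 1 := by
      rw [List.map_ofFn, List.ext_getElem_iff]
      simp [Equiv.ext_iff, Fin.ext_iff, Fin.forall_iff]
    have h := list_prod_map_shift_apply hr (List.ofFn σ) 0 (by simp)
    rw [List.length_ofFn, zero_add, List.map_ofFn] at h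
    rw [if_congr hrange rfl rfl] at h
    exact h
  simp [standardPolynomial, LinearMap.sum_apply, Units.smul_def, hperm]

theorem SatisfiesStandardIdentity.finite_end {R M : Type*} [Ring R] [AddCommGroup M] [Module R M]
    [IsSimpleModule R M] {N : ℕ} (hR : SatisfiesStandardIdentity R N) :
    Module.Finite (Module.End R M) M := by
  classical
  by_contra hfin
  let b := Basis.ofVectorSpace (Module.End R M) M
  have : Infinite (Basis.ofVectorSpaceIndex (Module.End R M) M) :=
    not_finite_iff_infinite.1 fun _ => hfin (Module.Finite.of_basis b)
  let e := Infinite.natEmbedding (Basis.ofVectorSpaceIndex (Module.End R M) M)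
  let w : ℕ → M := fun j => b (e j)
  let shift (i : ℕ) : Module.End (Module.End R M) M :=
    b.constr ℕ fun j => if j = e (i + 1) then w i else 0
  have hshift (i j : ℕ) : shift i (w j) = if j = i + 1 then w i else 0 := by
    simp only [shift, w, Basis.constr_basis, e.injective.eq_iff]
  choose r hr using fun i : Fin N => jacobson_density (shift i) ((Finset.range (N + 1)).image w)
  have hw : standardPolynomial (fun i => Module.toModuleEnd ℤ M (r i)) (w N) = w 0 :=
    standardPolynomial_shift_apply fun i j hj => by
      rw [← hshift, hr i (w j) (Finset.mem_image_of_mem w (by simpa [Nat.lt_succ_iff] using hj))]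
      rfl
  rw [← map_standardPolynomial, hR, map_zero] at hw
  exact b.ne_zero (e 0) hw.symm

theorem SatisfiesStandardIdentity.finite_of_centralizer_subset {K B M : Type*} [CommRing K]
    [Ring B] [AddCommGroup M] [Module K M] [Module B M] [SMulCommClass K B M]
    [IsSimpleModule B M] {N : ℕ} (hB : SatisfiesStandardIdentity B N)
    (hK : (Set.range (Module.toModuleEnd B (S := K) M)).centralizer ⊆
      Set.range (Module.toModuleEnd B (S := K) M)) :
    Module.Finite K M := by
  have := SMulCommClass.symm K B M
  let R := Algebra.adjoin K (Set.range (Module.toModuleEnd K (S := B) M))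
  let ofB (b : B) : R := ⟨Module.toModuleEnd K M b, Algebra.subset_adjoin ⟨b, rfl⟩⟩
  have hsimple : IsSimpleModule R M := by
    have := IsSimpleModule.nontrivial B M
    refine isSimpleModule_iff_toSpanSingleton_surjective.2 ⟨this, fun m hm y => ?_⟩
    obtain ⟨b, hb⟩ := IsSimpleModule.toSpanSingleton_surjective B hm y
    exact ⟨ofB b, hb⟩
  have hscalar : Function.Surjective (algebraMap K (Module.End R M)) := by
    intro φ
    let φB : Module.End B M :=
      { toFun := φ, map_add' := map_add φ, map_smul' := fun b => map_smul φ (ofB b) }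
    have hφB : φB ∈ (Set.range (Module.toModuleEnd B (S := K) M)).centralizer := by
      rintro _ ⟨c, rfl⟩
      ext m
      exact (map_smul φ (algebraMap K R c) m).symm
    obtain ⟨c, hc⟩ := hK hφB
    exact ⟨c, LinearMap.ext fun m => LinearMap.congr_fun hc m⟩
  have := (hB.adjoin_range K (Module.toModuleEnd K (S := B) M)).finite_end (M := M)
  have := Module.Finite.of_surjective (Algebra.linearMap K (Module.End R M)) hscalar
  exact Module.Finite.trans (Module.End R M) M

theorem exists_centralizer_eq_self (D : Type*) [Mul D] : ∃ S : Set D, S.centralizer = S := by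
  obtain ⟨S, hS⟩ := zorn_subset {S : Set D | S.Pairwise Commute} fun c hc hchain =>
    ⟨⋃₀ c, (Set.pairwise_sUnion hchain.directedOn).2 hc, fun _ => Set.subset_sUnion_of_mem⟩
  refine ⟨S, Set.Subset.antisymm (fun x hx => ?_) fun x hx y hy => ?_⟩
  · refine hS.le_of_ge ?_ (Set.subset_insert x S) (Set.mem_insert x S)
    exact hS.prop.insert_of_symm fun y hy _ => (hx y hy).symm
  · exact hS.prop.of_refl hy hx

theorem exists_subalgebra_isField_centralizer_eq_self (k D : Type*) [CommRing k] [DivisionRing D]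
    [Algebra k D] : ∃ K : Subalgebra k D, IsField K ∧ (K : Set D).centralizer = K := by
  obtain ⟨S, hS⟩ := exists_centralizer_eq_self D
  have hK : (Subalgebra.centralizer k S : Set D) = S := by rw [Subalgebra.coe_centralizer, hS]
  refine ⟨Subalgebra.centralizer k S, ⟨exists_pair_ne _, fun x y => ?_, fun {x} hx => ?_⟩, ?_⟩
  · exact Subtype.ext (y.2 x (hK.subset x.2))
  · exact ⟨⟨x⁻¹, Set.inv_mem_centralizer₀ x.2⟩,
      Subtype.ext (mul_inv_cancel₀ fun h => hx (Subtype.ext h))⟩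
  · rw [hK, hS]

theorem SatisfiesStandardIdentity.exists_subalgebra_isField_finite (k : Type*) {B M : Type*}
    [CommRing k] [Ring B] [Algebra k B] [AddCommGroup M] [Module k M] [Module B M]
    [IsScalarTower k B M] [IsSimpleModule B M] {N : ℕ} (hB : SatisfiesStandardIdentity B N) :
    ∃ K : Subalgebra k (Module.End B M), IsField K ∧ Module.Finite K M := by
  classical
  obtain ⟨K, hK, hcentralizer⟩ := exists_subalgebra_isField_centralizer_eq_self k (Module.End B M)
  let := hK.toField
  have hrange : Set.range (Module.toModuleEnd B (S := K) M) = K := by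
    ext x
    exact ⟨by rintro ⟨c, rfl⟩; exact c.2, fun hx => ⟨⟨x, hx⟩, rfl⟩⟩
  refine ⟨K, hK, hB.finite_of_centralizer_subset ?_⟩
  rw [hrange, hcentralizer]

theorem SatisfiesStandardIdentity.exists_matrix_algHom_of_isSimpleModule (k : Type*) {B : Type*}
    (M : Type u) [CommRing k] [Ring B] [Algebra k B] [AddCommGroup M] [Module k M] [Module B M]
    [IsScalarTower k B M] [IsSimpleModule B M] {N : ℕ} (hB : SatisfiesStandardIdentity B N) :
    ∃ (K : Type u) (_ : Field K) (_ : Algebra k K) (n : ℕ) (ρ : B →ₐ[k] Matrix (Fin n) (Fin n) K),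
      ∀ b, ρ b = 0 → ∀ m : M, b • m = 0 := by
  obtain ⟨K, hK, _⟩ := hB.exists_subalgebra_isField_finite k (M := M)
  let : Field K := hK.toField
  let τ := LinearMap.toMatrixAlgEquiv (finBasis K M)
  refine ⟨K, inferInstance, inferInstance, finrank K M,
    (τ.restrictScalars k).toAlgHom.comp (Algebra.lsmul k K M), fun b hb m => ?_⟩
  have hb' : Algebra.lsmul k K M b = 0 := τ.injective (hb.trans (map_zero τ).symm)
  exact LinearMap.congr_fun hb' m

end Kaplansky

theorem isNilpotent_of_C_mem_jacobson {A : Type*} [Ring A] {g : A}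
    (hg : C g ∈ Ring.jacobson A[X]) : IsNilpotent g := by
  rw [← Ideal.jacobson_bot, Ideal.mem_jacobson_iff] at hg
  -- `p` is a left inverse of `1 - g X`, so it has to be the geometric series `∑ gⁱ Xⁱ`.
  obtain ⟨p, hp⟩ := hg (-X)
  have hp' : p = p * C g * X + 1 := by
    rw [Ideal.mem_bot, sub_eq_zero] at hp
    rw [mul_assoc, ← X_mul, ← mul_assoc, ← hp]
    simp
  have hcoeff (i : ℕ) : p.coeff i = g ^ i := by
    induction i with
    | zero => rw [hp']; simp
    | succ i ih => rw [hp']; simp [coeff_one, ih, pow_succ]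
  exact ⟨p.natDegree + 1, by rw [← hcoeff, coeff_eq_zero_of_natDegree_lt p.natDegree.lt_succ_self]⟩

theorem SatisfiesStandardIdentity.exists_matrix_algHom_apply_ne_zero (k : Type*) [CommRing k]
    {A : Type u} [Ring A] [Algebra k A] {N : ℕ} (hA : SatisfiesStandardIdentity A N) {g : A}
    (hg : ¬IsNilpotent g) :
    ∃ (K : Type u) (_ : Field K) (_ : Algebra k K) (n : ℕ) (ρ : A →ₐ[k] Matrix (Fin n) (Fin n) K),
      ρ g ≠ 0 := by
  have hjac : C g ∉ Ring.jacobson A[X] := fun h => hg (isNilpotent_of_C_mem_jacobson h)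
  rw [Ring.jacobson, Module.jacobson, Submodule.mem_sInf] at hjac
  push Not at hjac
  obtain ⟨L, hL : IsCoatom L, hgL⟩ := hjac
  have : IsSimpleModule A[X] (A[X] ⧸ L) := isSimpleModule_iff_isCoatom.2 hL
  obtain ⟨K, _, _, n, ρ, hρ⟩ :=
    hA.polynomial.exists_matrix_algHom_of_isSimpleModule k (A[X] ⧸ L)
  refine ⟨K, inferInstance, inferInstance, n, ρ.comp CAlgHom, fun h => hgL ?_⟩
  have hmk : Submodule.Quotient.mk (p := L) (C g • 1) = 0 := hρ (C g) h (Submodule.Quotient.mk 1)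
  rwa [Submodule.Quotient.mk_eq_zero, smul_eq_mul, mul_one] at hmk

section Specialization

variable {k K A n : Type*} [Fintype n] [DecidableEq n]

theorem exists_fg_range_le_matrix [CommRing k] [CommRing K] [Algebra k K] [Ring A] [Algebra k A]
    [Algebra.FiniteType k A] (ρ : A →ₐ[k] Matrix n n K) :
    ∃ R : Subalgebra k K, R.FG ∧ ρ.range ≤ R.matrix := by
  obtain ⟨s, hs⟩ := Algebra.FiniteType.out (R := k) (A := A)
  let entries : Set K := Set.range fun q : s × n × n => ρ q.1 q.2.1 q.2.2
  refine ⟨Algebra.adjoin k entries, Subalgebra.fg_def.2 ⟨_, Set.finite_range _, rfl⟩, ?_⟩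
  rw [← Algebra.map_top, ← hs, AlgHom.map_adjoin, Algebra.adjoin_le_iff]
  rintro _ ⟨a, ha, rfl⟩ i j
  exact Algebra.subset_adjoin ⟨(⟨a, ha⟩, i, j), rfl⟩

theorem nonempty_algHom_of_finiteType [Field k] [IsAlgClosed k] [CommRing A] [Nontrivial A]
    [Algebra k A] [Algebra.FiniteType k A] : Nonempty (A →ₐ[k] k) := by
  obtain ⟨m, hm⟩ := Ideal.exists_maximal A
  let := Ideal.Quotient.field m
  have := finite_of_finite_type_of_isJacobsonRing k (A ⧸ m)
  exact ⟨(IsAlgClosed.lift : A ⧸ m →ₐ[k] k).comp (Ideal.Quotient.mkₐ k m)⟩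

theorem exists_matrix_algHom_specialization [Field k] [IsAlgClosed k] [Field K] [Algebra k K]
    [Ring A] [Algebra k A] [Algebra.FiniteType k A] (ρ : A →ₐ[k] Matrix n n K) {g : A}
    (hg : ρ g ≠ 0) : ∃ σ : A →ₐ[k] Matrix n n k, σ g ≠ 0 := by
  obtain ⟨i, j, hij⟩ : ∃ i j, ρ g i j ≠ 0 := by
    by_contra! h
    exact hg (Matrix.ext h)
  obtain ⟨R₀, hR₀, hρ⟩ := exists_fg_range_le_matrix ρ
  let R := R₀ ⊔ Algebra.adjoin k {(ρ g i j)⁻¹}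
  have hinv : (ρ g i j)⁻¹ ∈ R := le_sup_right (a := R₀) (Algebra.self_mem_adjoin_singleton k _)
  have hρR (a : A) : ρ a ∈ R.val.mapMatrix.range (R := k) (A := Matrix n n R) := by
    have hmem (i j) : ρ a i j ∈ R := le_sup_left (a := R₀) (hρ ⟨a, rfl⟩ i j)
    exact ⟨Matrix.of fun i j => ⟨ρ a i j, hmem i j⟩, rfl⟩
  let ι := AlgEquiv.ofInjective (R.val.mapMatrix (m := n))
    (Matrix.map_injective Subtype.val_injective)
  let ρR : A →ₐ[k] Matrix n n R := ι.symm.toAlgHom.comp (ρ.codRestrict _ hρR)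
  have hρR_apply : (ρR g i j : K) = ρ g i j := by
    have h : ι (ρR g) = ρ.codRestrict _ hρR g := ι.apply_symm_apply _
    exact congrFun (congrFun (congrArg Subtype.val h) i) j
  have : Algebra.FiniteType k R :=
    R.fg_iff_finiteType.1 (hR₀.sup (Subalgebra.fg_def.2 ⟨_, Set.finite_singleton _, rfl⟩))
  obtain ⟨ψ⟩ : Nonempty (R →ₐ[k] k) := nonempty_algHom_of_finiteType
  refine ⟨ψ.mapMatrix.comp ρR, fun h => ?_⟩
  have hunit : IsUnit (ρR g i j) :=
    .of_mul_eq_one ⟨_, hinv⟩ (Subtype.ext (by simp [hρR_apply, hij]))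
  exact (hunit.map ψ).ne_zero (congrFun (congrFun h i) j)

end Specialization

theorem SatisfiesStandardIdentity.isNilpotent_of_forall_algHom_apply_eq_zero {k A : Type*} [Field k]
    [IsAlgClosed k] [Ring A] [Algebra k A] [Algebra.FiniteType k A] {N : ℕ}
    (hA : SatisfiesStandardIdentity A N) {g : A}
    (hg : ∀ (n : ℕ) (σ : A →ₐ[k] Matrix (Fin n) (Fin n) k), σ g = 0) : IsNilpotent g := by
  by_contra hnil
  obtain ⟨K, _, _, n, ρ, hρ⟩ := hA.exists_matrix_algHom_apply_ne_zero k hnil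
  obtain ⟨σ, hσ⟩ := exists_matrix_algHom_specialization ρ hρ
  exact hσ (hg n σ)

/-- The T-ideal `PI_n` of the polynomial identities in `d` variables of the `n × n` matrices. -/
noncomputable def matrixIdentities (k : Type*) [CommRing k] (d n : ℕ) :
    TwoSidedIdeal (FreeAlgebra k (Fin d)) :=
  ⨅ X : Fin d → Matrix (Fin n) (Fin n) k, TwoSidedIdeal.ker (FreeAlgebra.lift k X)

section MatrixIdentities

variable {k : Type*} {d n : ℕ}

theorem mem_matrixIdentities [CommRing k] {q : FreeAlgebra k (Fin d)} :
    q ∈ matrixIdentities k d n ↔ ∀ X : Fin d → Matrix (Fin n) (Fin n) k, ncEval X q = 0 := by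
  simp only [matrixIdentities, TwoSidedIdeal.mem_iInf, TwoSidedIdeal.mem_ker, ncEval]

theorem SatisfiesStandardIdentity.of_matrixIdentities_le [Field k]
    {J : TwoSidedIdeal (FreeAlgebra k (Fin d))} (hJ : matrixIdentities k d n ≤ J) :
    SatisfiesStandardIdentity J.ringCon.Quotient (n * n + 1) := by
  intro a
  obtain ⟨b, rfl⟩ := (J.ringCon.mk'_surjective).comp_left a
  refine (map_standardPolynomial J.ringCon.mk' b).symm.trans
    ((RingCon.eq J.ringCon).2 (hJ (mem_matrixIdentities.2 fun X => ?_)))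
  refine (map_standardPolynomial (FreeAlgebra.lift k X).toRingHom b).trans ?_
  exact SatisfiesStandardIdentity.of_finrank_lt k (by simp [finrank_matrix]) _

theorem exists_pow_mem_of_forall_ncEval [Field k] [IsAlgClosed k]
    {J : TwoSidedIdeal (FreeAlgebra k (Fin d))} (hJ : matrixIdentities k d n ≤ J)
    {g : FreeAlgebra k (Fin d)}
    (hg : ∀ (m : ℕ) (X : Fin d → Matrix (Fin m) (Fin m) k), (∀ p ∈ J, ncEval X p = 0) →
      ncEval X g = 0) :
    ∃ r, g ^ r ∈ J := by
  let π : FreeAlgebra k (Fin d) →ₐ[k] J.ringCon.Quotient := J.ringCon.mkₐ k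
  have hπ (p) : π p = 0 ↔ p ∈ J := by
    rw [TwoSidedIdeal.mem_iff]
    exact RingCon.eq J.ringCon
  have : Algebra.FiniteType k J.ringCon.Quotient :=
    .of_surjective π (RingCon.mkₐ_surjective (α := k) _)
  have hnil : IsNilpotent (π g) := by
    have hid := SatisfiesStandardIdentity.of_matrixIdentities_le hJ
    refine hid.isNilpotent_of_forall_algHom_apply_eq_zero (k := k) fun m σ => ?_
    have hσ (p) : ncEval (fun i => σ (π (FreeAlgebra.ι k i))) p = σ (π p) :=
      DFunLike.congr_fun (FreeAlgebra.lift_comp_ι (σ.comp π)) p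
    rw [← hσ]
    exact hg m _ fun p hp => by rw [hσ, (hπ p).2 hp, map_zero]
  obtain ⟨r, hr⟩ := hnil
  exact ⟨r, (hπ _).1 (by rw [map_pow, hr])⟩

end MatrixIdentities

theorem amitsur_nullstellensatz_general {k ι : Type*} [Field k] [IsAlgClosed k] {d : ℕ}
    {f : ι → FreeAlgebra k (Fin d)} {g : FreeAlgebra k (Fin d)}
    (hzero : ∀ n, 1 ≤ n → ∀ X : Fin d → Matrix (Fin n) (Fin n) k,
        (∀ j, ncEval X (f j) = 0) → ncEval X g = 0) (n : ℕ) :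
    ∃ r, 1 ≤ r ∧ ∃ p q, p ∈ TwoSidedIdeal.span (Set.range f) ∧
      (∀ X : Fin d → Matrix (Fin n) (Fin n) k, ncEval X q = 0) ∧ g ^ r = p + q := by
  let J := TwoSidedIdeal.span (Set.range f) ⊔ matrixIdentities k d n
  obtain ⟨r, hr⟩ : ∃ r, g ^ r ∈ J := by
    refine exists_pow_mem_of_forall_ncEval le_sup_right fun m X hX => ?_
    obtain rfl | hm := m.eq_zero_or_pos
    · exact Subsingleton.elim _ _
    · refine hzero m hm X fun j => hX _ (TwoSidedIdeal.mem_sup_left ?_)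
      exact TwoSidedIdeal.subset_span ⟨j, rfl⟩
  have hr' : g ^ (r + 1) ∈ J := pow_succ g r ▸ J.mul_mem_right _ _ hr
  obtain ⟨p, hp, q, hq, hpq⟩ := TwoSidedIdeal.mem_sup.1 hr'
  exact ⟨r + 1, r.succ_pos, p, q, hp, mem_matrixIdentities.1 hq, hpq.symm⟩

/-- Amitsur's Nullstellensatz: if `g` vanishes on the common matricial zero set of
`f_1, …, f_ℓ`, then for every `n ≥ 1` some power `g^r` lies in the sum of the
two-sided ideal generated by `f_1, …, f_ℓ` and the ideal `PI_n` of polynomial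
identities of `n × n` matrices. -/
theorem amitsur_nullstellensatz
    (k : Type*) [Field k] [IsAlgClosed k] [CharZero k]
    (d ℓ : ℕ) (f : Fin ℓ → FreeAlgebra k (Fin d)) (g : FreeAlgebra k (Fin d))
    (hzero : ∀ (n : ℕ), 1 ≤ n → ∀ X : Fin d → Matrix (Fin n) (Fin n) k,
        (∀ j, ncEval X (f j) = 0) → ncEval X g = 0) :
    ∀ (n : ℕ), 1 ≤ n → ∃ r : ℕ, 1 ≤ r ∧
      ∃ p q : FreeAlgebra k (Fin d),
        p ∈ TwoSidedIdeal.span (Set.range f) ∧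
        (∀ X : Fin d → Matrix (Fin n) (Fin n) k, ncEval X q = 0) ∧
        g ^ r = p + q := by
  exact fun n _ => amitsur_nullstellensatz_general hzero n
end

section
/- Let f_1,…,f_ℓ ∈ k⟨x_1,…,x_d⟩ be homogeneous (each f_j a k-linear combination of words of a single fixed length depending on j), and let g ∈ k⟨x_1,…,x_d⟩. Then the following are equivalent: (i) for every n ≥ 1 and every X ∈ M_n(k)^d, f_1(X) = … = f_ℓ(X) = 0 implies g(X) = 0; (ii) g belongs to the two-sided ideal of k⟨x_1,…,x_d⟩ generated by f_1,…,f_ℓ. -/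
/-- `f ∈ k⟨x_1,…,x_d⟩` is homogeneous of degree `m` if it is a `k`-linear
combination of words of length `m` in the generators. -/
def IsNcHomogeneous {k : Type*} [CommSemiring k] {d : ℕ}
    (m : ℕ) (f : FreeAlgebra k (Fin d)) : Prop :=
  f ∈ Submodule.span k
    {w : FreeAlgebra k (Fin d) |
      ∃ l : List (Fin d), l.length = m ∧ w = (l.map (FreeAlgebra.ι k)).prod}

open Polynomial

section Grading

variable (R σ : Type*) [CommSemiring R]

/-- The degree `m` component of the free algebra: the span of the words of length `m`. It extends
`IsNcHomogeneous m` to an arbitrary alphabet. -/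
def ncHomogeneousSubmodule (m : ℕ) : Submodule R (FreeAlgebra R σ) :=
  Submodule.span R {w | ∃ l : List σ, l.length = m ∧ w = (l.map (FreeAlgebra.ι R)).prod}

/-- The grading of the free algebra by degree, encoded as the homomorphism `x_i ↦ x_i t` into
polynomials in a central variable `t`: the coefficient of `t ^ m` is the component of degree `m`. -/
noncomputable def ncGradingHom : FreeAlgebra R σ →ₐ[R] (FreeAlgebra R σ)[X] :=
  FreeAlgebra.lift R fun i => monomial 1 (FreeAlgebra.ι R i)

variable {R σ}

theorem ncGradingHom_prod_map_ι (l : List σ) :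
    ncGradingHom R σ (l.map (FreeAlgebra.ι R)).prod =
      monomial l.length (l.map (FreeAlgebra.ι R)).prod := by
  induction l with
  | nil => simp
  | cons i l ih =>
    rw [List.map_cons, List.prod_cons, map_mul, ih, ncGradingHom, FreeAlgebra.lift_ι_apply,
      monomial_mul_monomial, List.length_cons, Nat.add_comm]

theorem ncGradingHom_eq_monomial {m : ℕ} {a : FreeAlgebra R σ}
    (ha : a ∈ ncHomogeneousSubmodule R σ m) : ncGradingHom R σ a = monomial m a := by
  induction ha using Submodule.span_induction with
  | mem _ h =>
    obtain ⟨l, rfl, rfl⟩ := h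
    exact ncGradingHom_prod_map_ι l
  | zero => simp
  | add a b _ _ ha hb => rw [map_add, ha, hb, map_add]
  | smul r a _ ha => rw [map_smul, ha, smul_monomial]

theorem eval_one_ncGradingHom (a : FreeAlgebra R σ) : (ncGradingHom R σ a).eval 1 = a := by
  let evalOne : (FreeAlgebra R σ)[X] →ₐ[R] FreeAlgebra R σ :=
    eval₂AlgHom (AlgHom.id R _) 1 Commute.one_right
  have h : evalOne.comp (ncGradingHom R σ) = AlgHom.id R _ := by
    ext i
    simp [evalOne, eval₂AlgHom, ncGradingHom, eval₂_monomial]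
  exact DFunLike.congr_fun h a

theorem span_range_prod_map_ι :
    Submodule.span R (Set.range fun l : List σ => (l.map (FreeAlgebra.ι R)).prod) = ⊤ := by
  rw [← Algebra.top_toSubmodule, ← FreeAlgebra.adjoin_range_ι, Algebra.adjoin_eq_span,
    ← FreeMonoid.mrange_lift, MonoidHom.coe_mrange]
  exact congrArg (Submodule.span R ∘ Set.range)
    (funext fun l => (FreeMonoid.lift_apply _ (FreeMonoid.ofList l)).symm)

theorem finite_of_surjective_of_prod_map_ι_eq_zero [Finite σ] {B : Type*} [Semiring B]
    [Algebra R B] {φ : FreeAlgebra R σ →ₐ[R] B} (hφ : Function.Surjective φ) {N : ℕ}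
    (hN : ∀ l : List σ, N ≤ l.length → φ (l.map (FreeAlgebra.ι R)).prod = 0) :
    Module.Finite R B := by
  let word (l : List σ) : FreeAlgebra R σ := (l.map (FreeAlgebra.ι R)).prod
  have hfin : ((φ ∘ word) '' {l | l.length < N}).Finite := (List.finite_length_lt σ N).image _
  refine .of_fg_top (Submodule.fg_def.2 ⟨_, hfin, eq_top_iff.2 ?_⟩)
  rw [← LinearMap.range_eq_top_of_surjective φ.toLinearMap hφ, LinearMap.range_eq_map,
    ← span_range_prod_map_ι, Submodule.map_span, Submodule.span_le]
  rintro _ ⟨_, ⟨l, rfl⟩, rfl⟩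
  rcases lt_or_ge l.length N with hl | hl
  · exact Submodule.subset_span ⟨l, hl, rfl⟩
  · exact (hN l hl).symm ▸ Submodule.zero_mem _

end Grading

section Truncation

theorem mkₐ_ringCon_eq_zero_iff (R : Type*) {A : Type*} [CommSemiring R] [Ring A]
    [Algebra R A] (J : TwoSidedIdeal A) {a : A} : J.ringCon.mkₐ R a = 0 ↔ a ∈ J := by
  rw [TwoSidedIdeal.mem_iff]
  exact RingCon.eq J.ringCon

/-- The ideal `I[t] + (t ^ N)` of `A[t]`, whose quotient is the truncation of `(A ⧸ I)[t]` at
degree `N`. -/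
noncomputable def truncatedCoeffIdeal {A : Type*} [Ring A] (I : TwoSidedIdeal A) (N : ℕ) :
    TwoSidedIdeal A[X] :=
  .mk' {p | ∀ m < N, p.coeff m ∈ I}
    (fun m _ => by simpa only [coeff_zero] using I.zero_mem)
    (fun hp hq m hm => by simpa only [coeff_add] using I.add_mem (hp m hm) (hq m hm))
    (fun hp m hm => by simpa only [coeff_neg] using I.neg_mem (hp m hm))
    (fun {p q} hq m hm => by
      rw [coeff_mul]
      exact sum_mem fun x hx => I.mul_mem_left _ _
        (hq _ ((Finset.HasAntidiagonal.antidiagonal.snd_le hx).trans_lt hm)))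
    (fun {p q} hp m hm => by
      rw [coeff_mul]
      exact sum_mem fun x hx => I.mul_mem_right _ _
        (hp _ ((Finset.HasAntidiagonal.antidiagonal.fst_le hx).trans_lt hm)))

theorem mem_truncatedCoeffIdeal {A : Type*} [Ring A] {I : TwoSidedIdeal A} {N : ℕ} {p : A[X]} :
    p ∈ truncatedCoeffIdeal I N ↔ ∀ m < N, p.coeff m ∈ I := by
  rw [truncatedCoeffIdeal, TwoSidedIdeal.mem_mk', Set.mem_ofPred_eq]

variable {R σ : Type*} [CommRing R] (I : TwoSidedIdeal (FreeAlgebra R σ)) (N : ℕ)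

/-- The ideal of the elements of the free algebra whose components of degree less than `N` all lie
in `I`. When `I` is homogeneous, this is the sum of `I` and the `N`-th power of the ideal generated
by the variables. -/
noncomputable def ncTruncation : TwoSidedIdeal (FreeAlgebra R σ) :=
  (truncatedCoeffIdeal I N).comap (ncGradingHom R σ)

variable {I N}

theorem mem_ncTruncation {a : FreeAlgebra R σ} :
    a ∈ ncTruncation I N ↔ ∀ m < N, (ncGradingHom R σ a).coeff m ∈ I := by
  rw [ncTruncation, TwoSidedIdeal.mem_comap, mem_truncatedCoeffIdeal]

theorem mem_ncTruncation_of_homogeneous {m : ℕ} {a : FreeAlgebra R σ}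
    (hm : a ∈ ncHomogeneousSubmodule R σ m) (ha : a ∈ I) : a ∈ ncTruncation I N := by
  rw [mem_ncTruncation]
  intro j _
  rw [ncGradingHom_eq_monomial hm, coeff_monomial]
  split_ifs
  exacts [ha, I.zero_mem]

theorem prod_map_ι_mem_ncTruncation {l : List σ} (hl : N ≤ l.length) :
    (l.map (FreeAlgebra.ι R)).prod ∈ ncTruncation I N := by
  rw [mem_ncTruncation]
  intro m hm
  rw [ncGradingHom_prod_map_ι, coeff_monomial_of_ne _ (hm.trans_le hl).ne]
  exact I.zero_mem

theorem mem_of_forall_mem_ncTruncation {a : FreeAlgebra R σ} (ha : ∀ N, a ∈ ncTruncation I N) :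
    a ∈ I := by
  rw [← eval_one_ncGradingHom a, eval_eq_sum]
  exact sum_mem fun m _ =>
    I.mul_mem_right _ _ (mem_ncTruncation.1 (ha (m + 1)) m m.lt_succ_self)

theorem finite_quotient_ncTruncation [Finite σ] :
    Module.Finite R (ncTruncation I N).ringCon.Quotient :=
  finite_of_surjective_of_prod_map_ι_eq_zero (RingCon.mkₐ_surjective _) fun _ hl =>
    (mkₐ_ringCon_eq_zero_iff R _).2 (prod_map_ι_mem_ncTruncation hl)

end Truncation

section MatrixZeros

theorem exists_injective_algHom_matrix (R B : Type*) [CommRing R] [Ring B] [Algebra R B]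
    [Module.Free R B] [Module.Finite R B] [Nontrivial B] :
    ∃ n, 1 ≤ n ∧ ∃ ρ : B →ₐ[R] Matrix (Fin n) (Fin n) R, Function.Injective ρ := by
  have : Nontrivial R := Module.nontrivial R B
  exact ⟨Module.finrank R B, (Module.finrank_pos_iff_of_free R B).2 ‹_›,
    Algebra.leftMulMatrix (Module.finBasis R B), Algebra.leftMulMatrix_injective _⟩

variable {σ ι : Type*}

theorem algHom_apply_eq_zero_of_forall_matrix {R B : Type*} [CommRing R] [Ring B] [Algebra R B]
    [Module.Free R B] [Module.Finite R B] {f : ι → FreeAlgebra R σ} {g : FreeAlgebra R σ}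
    (h : ∀ n, 1 ≤ n → ∀ X : σ → Matrix (Fin n) (Fin n) R,
      (∀ j, FreeAlgebra.lift R X (f j) = 0) → FreeAlgebra.lift R X g = 0)
    (φ : FreeAlgebra R σ →ₐ[R] B) (hφ : ∀ j, φ (f j) = 0) : φ g = 0 := by
  rcases subsingleton_or_nontrivial B with _ | _
  · exact Subsingleton.elim _ _
  obtain ⟨n, hn, ρ, hρ⟩ := exists_injective_algHom_matrix R B
  have hlift : FreeAlgebra.lift R (ρ.comp φ ∘ FreeAlgebra.ι R) = ρ.comp φ :=
    FreeAlgebra.lift_comp_ι (ρ.comp φ)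
  have hg := h n hn (ρ.comp φ ∘ FreeAlgebra.ι R) fun j => by
    rw [hlift, AlgHom.comp_apply, hφ, map_zero]
  rw [hlift, AlgHom.comp_apply] at hg
  exact (map_eq_zero_iff ρ hρ).1 hg

theorem homogeneous_nullstellensatz_general {k : Type*} [Field k] [Finite σ]
    (f : ι → FreeAlgebra k σ) (hf : ∀ j, ∃ m, f j ∈ ncHomogeneousSubmodule k σ m)
    (g : FreeAlgebra k σ) :
    (∀ n, 1 ≤ n → ∀ X : σ → Matrix (Fin n) (Fin n) k,
      (∀ j, FreeAlgebra.lift k X (f j) = 0) → FreeAlgebra.lift k X g = 0) ↔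
      g ∈ TwoSidedIdeal.span (Set.range f) := by
  constructor
  · intro h
    refine mem_of_forall_mem_ncTruncation fun N => ?_
    have := finite_quotient_ncTruncation (I := .span (Set.range f)) (N := N)
    rw [← mkₐ_ringCon_eq_zero_iff k]
    refine algHom_apply_eq_zero_of_forall_matrix h _ fun j => ?_
    obtain ⟨m, hm⟩ := hf j
    exact (mkₐ_ringCon_eq_zero_iff k _).2
      (mem_ncTruncation_of_homogeneous hm (TwoSidedIdeal.subset_span ⟨j, rfl⟩))
  · intro hg n _ X hX
    have hle : TwoSidedIdeal.span (Set.range f) ≤ TwoSidedIdeal.ker (FreeAlgebra.lift k X) :=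
      TwoSidedIdeal.span_le.2 (Set.range_subset_iff.2 fun j => (TwoSidedIdeal.mem_ker _).2 (hX j))
    exact (TwoSidedIdeal.mem_ker _).1 (hle hg)

end MatrixZeros

/-- Salomon–Shalit–Shamovich: for homogeneous `f_1, …, f_ℓ`, the polynomial `g`
vanishes on the common matricial zero set of the `f_j` if and only if `g` lies in
the two-sided ideal generated by `f_1, …, f_ℓ`. -/
theorem homogeneous_nullstellensatz
    (k : Type*) [Field k] [IsAlgClosed k] [CharZero k]
    (d ℓ : ℕ) (hd : 1 ≤ d) (f : Fin ℓ → FreeAlgebra k (Fin d))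
    (hhom : ∀ j, ∃ m : ℕ, IsNcHomogeneous m (f j))
    (g : FreeAlgebra k (Fin d)) :
    (∀ (n : ℕ), 1 ≤ n → ∀ X : Fin d → Matrix (Fin n) (Fin n) k,
        (∀ j, ncEval X (f j) = 0) → ncEval X g = 0) ↔
      g ∈ TwoSidedIdeal.span (Set.range f) :=
  homogeneous_nullstellensatz_general f hhom g
end

section
/- Let d ≥ 3 and let f ∈ k⟨x_1,…,x_d⟩ be a nonconstant polynomial lying in the unital subalgebra generated by x_1,…,x_{d−2} only. Let g ∈ k⟨x_1,…,x_d⟩. Then the following are equivalent: (i) for every n ≥ 1 and every X ∈ M_n(k)^d with X_{d−1}X_d − f(X) = 0, one has g(X) = 0; (ii) g belongs to the two-sided ideal of k⟨x_1,…,x_d⟩ generated by x_{d−1}x_d − f. -/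
/-!
On the free algebra `A`, let every letter `i ≠ y` act by left multiplication and let `y` act by
`y · (z b) = f b` and `y · c = y c` for `c` in a linear complement of `z A`. Then `y z` acts as `f`,
and `p · 1 ≡ p` modulo the ideal generated by `y z - f`, so a polynomial `g` outside this ideal does
not act as zero. As `f` is nonconstant and does not involve `y`, the operator `y` is injective:
the longest words of `f b` do not begin with `y`.

The value `g · 1` depends on finitely many values of the operators, so they may be compressed to a
finite-dimensional subspace, where the injective partial map `y` extends to an automorphism. Finally
`z` is redefined there as `y⁻¹ f`.
-/

namespace NCNullstellensatz

open FreeAlgebra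

section Evaluation

variable {R σ : Type*}

lemma lift_eq_lift_of_mem_adjoin [CommSemiring R] {B : Type*} [Semiring B] [Algebra R B]
    {X Y : σ → B} {S : Set σ} (hXY : Set.EqOn X Y S) {f : FreeAlgebra R σ}
    (hf : f ∈ Algebra.adjoin R (ι R '' S)) : lift R X f = lift R Y f := by
  suffices h : Set.EqOn (lift R X) (lift R Y) (Algebra.adjoin R (ι R '' S)) from h hf
  rw [AlgHom.eqOn_adjoin_iff]
  rintro _ ⟨i, hi, rfl⟩
  simpa only [lift_ι_apply] using hXY hi

lemma lift_apply_sub_mul_mem [CommRing R] {T : σ → Module.End R (FreeAlgebra R σ)}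
    {I : Ideal (FreeAlgebra R σ)} (hT : ∀ i a, T i a - ι R i * a ∈ I)
    (p a : FreeAlgebra R σ) : lift R T p a - p * a ∈ I := by
  induction p generalizing a with
  | grade0 r => simp [Module.algebraMap_end_apply, Algebra.smul_def]
  | grade1 i => simpa only [lift_ι_apply] using hT i a
  | mul p q hp hq =>
    have h := I.add_mem (hp (lift R T q a)) (I.mul_mem_left p (hq a))
    rwa [mul_sub, sub_add_sub_cancel, ← mul_assoc, ← Module.End.mul_apply, ← map_mul] at h
  | add p q hp hq =>
    have h := I.add_mem (hp a) (hq a)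
    rwa [sub_add_sub_comm, ← LinearMap.add_apply, ← map_add, ← add_mul] at h

lemma map_eq_zero_of_mem_span_singleton {A B F : Type*} [Ring A] [Ring B] [FunLike F A B]
    [RingHomClass F A B] (φ : F) {p g : A} (hp : φ p = 0) (hg : g ∈ TwoSidedIdeal.span {p}) :
    φ g = 0 := by
  have hle : TwoSidedIdeal.span {p} ≤ TwoSidedIdeal.ker φ := by
    simpa [TwoSidedIdeal.span_le, TwoSidedIdeal.mem_ker] using hp
  exact (TwoSidedIdeal.mem_ker φ).1 (hle hg)

lemma exists_matrix_lift_eq_zero_iff [CommRing R] [Nontrivial R] {V : Type*} [AddCommGroup V]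
    [Module R V] [Module.Free R V] [Module.Finite R V] (T : σ → Module.End R V) :
    ∃ X : σ → Matrix (Fin (Module.finrank R V)) (Fin (Module.finrank R V)) R,
      ∀ p, lift R X p = 0 ↔ lift R T p = 0 := by
  let b := LinearMap.toMatrixAlgEquiv (Module.finBasis R V)
  have hb : lift R (b ∘ T) = (b : _ →ₐ[R] _).comp (lift R T) := by
    ext i : 2
    simp
  exact ⟨b ∘ T, fun p => by simp [hb]⟩

end Evaluation

section LongestWords

variable {R σ : Type*}

lemma uniqueMul_of_forall_length_le {A B : Finset (FreeMonoid σ)} {m w : FreeMonoid σ}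
    (hm : ∀ u ∈ A, u.length ≤ m.length) (hw : ∀ u ∈ B, u.length ≤ w.length) :
    UniqueMul A B m w := by
  intro m' w' hm' hw' h
  have hlen := congrArg FreeMonoid.length h
  rw [FreeMonoid.length_mul, FreeMonoid.length_mul] at hlen
  have hlen_left := hm m' hm'
  have hlen_right := hw w' hw'
  exact List.append_inj h (show m'.length = m.length by omega)

variable [CommSemiring R]

/-- The words occurring in a noncommutative polynomial with nonzero coefficient. -/
noncomputable def wordSupport (f : FreeAlgebra R σ) : Finset (FreeMonoid σ) :=
  (equivMonoidAlgebraFreeMonoid f).coeff.support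

lemma mem_wordSupport {f : FreeAlgebra R σ} {w : FreeMonoid σ} :
    w ∈ wordSupport f ↔ (equivMonoidAlgebraFreeMonoid f).coeff w ≠ 0 :=
  Finsupp.mem_support_iff

lemma equivMonoidAlgebraFreeMonoid_ι (i : σ) :
    equivMonoidAlgebraFreeMonoid (ι R i) = MonoidAlgebra.single (FreeMonoid.of i) 1 := by
  simp [equivMonoidAlgebraFreeMonoid]

lemma mem_of_mem_wordSupport_of_mem_adjoin {S : Set σ} {f : FreeAlgebra R σ}
    (hf : f ∈ Algebra.adjoin R (ι R '' S)) {w : FreeMonoid σ} (hw : w ∈ wordSupport f) {i : σ}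
    (hi : i ∈ w) : i ∈ S := by
  classical
  rw [wordSupport] at hw
  induction hf using Algebra.adjoin_induction generalizing w with
  | mem x hx =>
    obtain ⟨j, hj, rfl⟩ := hx
    rw [equivMonoidAlgebraFreeMonoid_ι, MonoidAlgebra.coeff_single] at hw
    obtain rfl : w = FreeMonoid.of j := by simpa using Finsupp.support_single_subset hw
    obtain rfl := FreeMonoid.mem_of.1 hi
    exact hj
  | algebraMap r =>
    rw [AlgEquiv.commutes, MonoidAlgebra.coe_algebraMap] at hw
    obtain rfl : w = 1 := by simpa using Finsupp.support_single_subset hw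
    exact absurd hi FreeMonoid.notMem_one
  | add p q _ _ hp hq =>
    rw [map_add] at hw
    rcases Finset.mem_union.1 (Finsupp.support_add hw) with hw | hw
    exacts [hp hw hi, hq hw hi]
  | mul p q _ _ hp hq =>
    rw [map_mul] at hw
    obtain ⟨u, hu, t, ht, rfl⟩ := Finset.mem_mul.1 (MonoidAlgebra.support_coeff_mul_subset _ _ hw)
    rcases FreeMonoid.mem_mul.1 hi with hi | hi
    exacts [hp hu hi, hq ht hi]

lemma exists_longest_mem_wordSupport {f : FreeAlgebra R σ} (hf : f ≠ 0) :
    ∃ m ∈ wordSupport f, ∀ w ∈ wordSupport f, w.length ≤ m.length :=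
  Finset.exists_max_image _ _ (Finsupp.support_nonempty_iff.2 (by simpa using hf))

lemma exists_mem_wordSupport_ne_one {f : FreeAlgebra R σ}
    (hf : f ∉ Set.range (algebraMap R (FreeAlgebra R σ))) : ∃ w ∈ wordSupport f, w ≠ 1 := by
  by_contra! h
  refine hf ⟨(equivMonoidAlgebraFreeMonoid f).coeff 1, equivMonoidAlgebraFreeMonoid.injective ?_⟩
  rw [AlgEquiv.commutes]
  ext w
  by_cases hw : w = 1
  · simp [hw]
  · have hfw : (equivMonoidAlgebraFreeMonoid f).coeff w = 0 :=
      by_contra fun hfw => hw (h w (mem_wordSupport.2 hfw))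
    simp [Finsupp.single_eq_of_ne hw, hfw]

lemma mul_mem_wordSupport_mul [NoZeroDivisors R] {f g : FreeAlgebra R σ} {m w : FreeMonoid σ}
    (hm : m ∈ wordSupport f) (hm_max : ∀ u ∈ wordSupport f, u.length ≤ m.length)
    (hw : w ∈ wordSupport g) (hw_max : ∀ u ∈ wordSupport g, u.length ≤ w.length) :
    m * w ∈ wordSupport (f * g) := by
  rw [mem_wordSupport, map_mul equivMonoidAlgebraFreeMonoid,
    MonoidAlgebra.coeff_mul_mul_of_uniqueMul (uniqueMul_of_forall_length_le hm_max hw_max)]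
  exact mul_ne_zero (mem_wordSupport.1 hm) (mem_wordSupport.1 hw)

lemma exists_eq_of_mul_of_mem_wordSupport_ι_mul {y : σ} {c : FreeAlgebra R σ} {w : FreeMonoid σ}
    (hw : w ∈ wordSupport (ι R y * c)) : ∃ u, w = FreeMonoid.of y * u := by
  by_contra! h
  rw [mem_wordSupport, map_mul equivMonoidAlgebraFreeMonoid, equivMonoidAlgebraFreeMonoid_ι] at hw
  exact hw (MonoidAlgebra.coeff_single_mul_of_forall_mul_ne _ _ fun u => (h u).symm)

theorem eq_zero_of_mul_eq_ι_mul [NoZeroDivisors R] {y : σ} {f b c : FreeAlgebra R σ}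
    (hf : f ∈ Algebra.adjoin R (ι R '' {y}ᶜ))
    (hfnc : f ∉ Set.range (algebraMap R (FreeAlgebra R σ))) (h : f * b = ι R y * c) : b = 0 := by
  by_contra hb
  have hf0 : f ≠ 0 := fun h0 => hfnc ⟨0, by rw [map_zero, h0]⟩
  obtain ⟨m, hm, hm_max⟩ := exists_longest_mem_wordSupport hf0
  obtain ⟨w, hw, hw_max⟩ := exists_longest_mem_wordSupport hb
  have hmw : m * w ∈ wordSupport (ι R y * c) := h ▸ mul_mem_wordSupport_mul hm hm_max hw hw_max
  obtain ⟨u, hu⟩ := exists_eq_of_mul_of_mem_wordSupport_ι_mul hmw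
  cases m using FreeMonoid.casesOn with
  | one =>
    obtain ⟨t, ht, ht1⟩ := exists_mem_wordSupport_ne_one hfnc
    exact ht1 (FreeMonoid.length_eq_zero.1 (Nat.le_zero.1 (hm_max t ht)))
  | of_mul x xs =>
    obtain rfl : x = y := (List.cons.inj hu).1
    have hx : x ∈ FreeMonoid.of x * xs := FreeMonoid.mem_mul.2 (.inl FreeMonoid.mem_of_self)
    exact mem_of_mem_wordSupport_of_mem_adjoin hf hm hx rfl

end LongestWords

section Rewriting

variable {k σ : Type*} [Field k]

/-- A linear left inverse of left multiplication by the letter `z`. Its values off the right ideal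
generated by `z` come from an unspecified choice of a linear complement. -/
noncomputable def stripLetter (z : σ) : Module.End k (FreeAlgebra k σ) :=
  (LinearMap.mulLeft k (ι k z)).leftInverse

lemma stripLetter_ι_mul (z : σ) (a : FreeAlgebra k σ) : stripLetter z (ι k z * a) = a :=
  LinearMap.leftInverse_apply_of_inj
    (LinearMap.ker_eq_bot.2 (mul_right_injective₀ (ι_ne_zero z))) a

/-- Left multiplication by the letter `y` in which a product `y z` is replaced by `f`: the operator
`z b ↦ f b` on the right ideal generated by `z`, and `c ↦ y c` on the complement chosen in
`stripLetter`. -/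
noncomputable def rewritingOp (y z : σ) (f : FreeAlgebra k σ) : Module.End k (FreeAlgebra k σ) :=
  LinearMap.mulLeft k f ∘ₗ stripLetter z + LinearMap.mulLeft k (ι k y) ∘ₗ
    (LinearMap.id - LinearMap.mulLeft k (ι k z) ∘ₗ stripLetter z)

variable {y z : σ} {f : FreeAlgebra k σ}

lemma rewritingOp_apply (a : FreeAlgebra k σ) :
    rewritingOp y z f a = f * stripLetter z a + ι k y * (a - ι k z * stripLetter z a) :=
  rfl

lemma rewritingOp_ι_mul (a : FreeAlgebra k σ) : rewritingOp y z f (ι k z * a) = f * a := by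
  rw [rewritingOp_apply, stripLetter_ι_mul, sub_self, mul_zero, add_zero]

lemma rewritingOp_injective (hf : f ∈ Algebra.adjoin k (ι k '' {y}ᶜ))
    (hfnc : f ∉ Set.range (algebraMap k (FreeAlgebra k σ))) :
    Function.Injective (rewritingOp y z f) := by
  rw [injective_iff_map_eq_zero]
  intro a ha
  rw [rewritingOp_apply] at ha
  have hstrip : stripLetter z a = 0 :=
    eq_zero_of_mul_eq_ι_mul hf hfnc ((eq_neg_of_add_eq_zero_left ha).trans (mul_neg _ _).symm)
  simpa [hstrip, ι_ne_zero] using ha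

lemma rewritingOp_sub_ι_mul (a : FreeAlgebra k σ) :
    rewritingOp y z f a - ι k y * a = -((ι k y * ι k z - f) * stripLetter z a) := by
  rw [rewritingOp_apply]
  noncomm_ring

variable [DecidableEq σ]

/-- The action of the letters on the free algebra in which `y` acts by `rewritingOp y z f` and every
other letter by left multiplication. -/
noncomputable def rewritingAction (y z : σ) (f : FreeAlgebra k σ) :
    σ → Module.End k (FreeAlgebra k σ) :=
  Function.update (fun i => LinearMap.mulLeft k (ι k i)) y (rewritingOp y z f)

lemma rewritingAction_self : rewritingAction y z f y = rewritingOp y z f :=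
  Function.update_self ..

lemma rewritingAction_of_ne {i : σ} (hi : i ≠ y) :
    rewritingAction y z f i = LinearMap.mulLeft k (ι k i) :=
  Function.update_of_ne hi ..

lemma lift_rewritingAction_of_mem_adjoin {p : FreeAlgebra k σ}
    (hp : p ∈ Algebra.adjoin k (ι k '' {y}ᶜ)) :
    lift k (rewritingAction y z f) p = LinearMap.mulLeft k p := by
  have hlmul :
      lift k (fun i => LinearMap.mulLeft k (ι k i)) = Algebra.lmul k (FreeAlgebra k σ) := by
    ext i : 2
    exact lift_ι_apply _ i
  rw [lift_eq_lift_of_mem_adjoin (fun i hi => rewritingAction_of_ne hi) hp, hlmul]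
  rfl

lemma rewritingAction_mul (hyz : y ≠ z) (hf : f ∈ Algebra.adjoin k (ι k '' {y}ᶜ)) :
    rewritingAction y z f y * rewritingAction y z f z = lift k (rewritingAction y z f) f := by
  rw [lift_rewritingAction_of_mem_adjoin hf, rewritingAction_self, rewritingAction_of_ne hyz.symm]
  exact LinearMap.ext rewritingOp_ι_mul

lemma lift_rewritingAction_one_ne_zero {g : FreeAlgebra k σ}
    (hg : g ∉ TwoSidedIdeal.span {ι k y * ι k z - f}) :
    lift k (rewritingAction y z f) g 1 ≠ 0 := by
  set I := TwoSidedIdeal.span {ι k y * ι k z - f}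
  have hletter (i : σ) (a : FreeAlgebra k σ) :
      rewritingAction y z f i a - ι k i * a ∈ I.asIdeal := by
    by_cases hi : i = y
    · rw [hi, rewritingAction_self, rewritingOp_sub_ι_mul]
      exact I.neg_mem (I.mul_mem_right _ _ (TwoSidedIdeal.subset_span rfl))
    · simp [rewritingAction_of_ne hi]
  have hmod := lift_apply_sub_mul_mem hletter g 1
  intro h
  rw [h, mul_one, zero_sub, neg_mem_iff] at hmod
  exact hg hmod

end Rewriting

section Truncation

section FiniteData

variable {R M σ : Type*} [CommSemiring R] [AddCommMonoid M] [Module R M]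

/-- The operators `T'` on the submodule `V` take the same values as the operators `T` at those pairs
`(i, u)` of `A` for which `u` lies in `V`. -/
def AgreesOn (T : σ → Module.End R M) {V : Submodule R M} (T' : σ → Module.End R V)
    (A : Set (σ × M)) : Prop :=
  ∀ (i : σ) (u : V), (i, (u : M)) ∈ A → (T' i u : M) = T i u

lemma AgreesOn.mono {T : σ → Module.End R M} {V : Submodule R M} {T' : σ → Module.End R V}
    {A B : Set (σ × M)} (h : AgreesOn T T' B) (hAB : A ⊆ B) : AgreesOn T T' A :=
  fun i u hu => h i u (hAB hu)

theorem exists_finset_lift_apply_eq_of_agreesOn (T : σ → Module.End R M) (p : FreeAlgebra R σ)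
    (v : M) : ∃ A : Finset (σ × M), ∀ (V : Submodule R M) (T' : σ → Module.End R V),
      AgreesOn T T' A → ∀ u : V, (u : M) = v → (lift R T' p u : M) = lift R T p v := by
  classical
  induction p generalizing v with
  | grade0 r => exact ⟨∅, fun V T' _ u hu => by simp [Module.algebraMap_end_apply, hu]⟩
  | grade1 i =>
    refine ⟨{(i, v)}, fun V T' hT' u hu => ?_⟩
    simpa [hu] using hT' i u (by simp [hu])
  | mul p q hp hq =>
    obtain ⟨B, hB⟩ := hq v
    obtain ⟨A, hA⟩ := hp (lift R T q v)
    refine ⟨A ∪ B, fun V T' hT' u hu => ?_⟩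
    rw [map_mul, map_mul, Module.End.mul_apply, Module.End.mul_apply]
    exact hA V T' (hT'.mono (by simp)) _ (hB V T' (hT'.mono (by simp)) u hu)
  | add p q hp hq =>
    obtain ⟨A, hA⟩ := hp v
    obtain ⟨B, hB⟩ := hq v
    refine ⟨A ∪ B, fun V T' hT' u hu => ?_⟩
    rw [map_add, map_add, LinearMap.add_apply, LinearMap.add_apply, Submodule.coe_add,
      hA V T' (hT'.mono (by simp)) u hu, hB V T' (hT'.mono (by simp)) u hu]

end FiniteData

section Compression

variable {K M : Type*} [DivisionRing K] [AddCommGroup M] [Module K M]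

/-- The compression of the operator `T` to the subspace `V`, along an unspecified projection. -/
noncomputable def compression (V : Submodule K M) (T : Module.End K M) : Module.End K V :=
  V.subtype.leftInverse ∘ₗ T ∘ₗ V.subtype

lemma coe_compression_apply {V : Submodule K M} {T : Module.End K M} {u : V} (h : T u ∈ V) :
    (compression V T u : M) = T u :=
  congrArg Subtype.val (LinearMap.leftInverse_apply_of_inj V.ker_subtype ⟨T u, h⟩)

lemma exists_linearEquiv_coe_apply_eq (V : Submodule K M) [FiniteDimensional K V]
    {T : Module.End K M} (hT : Function.Injective T) :
    ∃ E : V ≃ₗ[K] V, ∀ u : V, T u ∈ V → (E u : M) = T u := by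
  let W : Submodule K V := V.comap (T ∘ₗ V.subtype)
  let φ : W →ₗ[K] V := (T ∘ₗ V.subtype ∘ₗ W.subtype).codRestrict V Subtype.property
  have hφ : Function.Injective φ := fun a b hab =>
    Subtype.ext (Subtype.ext (hT (congrArg Subtype.val hab)))
  obtain ⟨E, hE⟩ := Submodule.exists_linearEquiv_restrict_eq (LinearEquiv.ofInjective φ hφ)
  exact ⟨E, fun u hu => congrArg Subtype.val (hE ⟨u, hu⟩).symm⟩

end Compression

section Resolution

variable {R V σ : Type*} [CommSemiring R] [AddCommMonoid V] [Module R V] [DecidableEq σ]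

/-- The operators obtained from `C` by letting `y` act as the automorphism `E` and by solving the
equation `y z = f` for `z`. -/
noncomputable def resolve (C : σ → Module.End R V) (E : V ≃ₗ[R] V) (y z : σ)
    (f : FreeAlgebra R σ) : σ → Module.End R V :=
  Function.update (Function.update C z (E.symm ∘ₗ lift R C f)) y E

variable {C : σ → Module.End R V} {E : V ≃ₗ[R] V} {y z : σ} {f : FreeAlgebra R σ}

lemma resolve_left : resolve C E y z f y = E :=
  Function.update_self ..

lemma resolve_right (hyz : y ≠ z) : resolve C E y z f z = E.symm ∘ₗ lift R C f := by
  rw [resolve, Function.update_of_ne hyz.symm, Function.update_self]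

lemma resolve_of_ne {i : σ} (hy : i ≠ y) (hz : i ≠ z) : resolve C E y z f i = C i := by
  rw [resolve, Function.update_of_ne hy, Function.update_of_ne hz]

lemma resolve_mul (hyz : y ≠ z) (hf : f ∈ Algebra.adjoin R (ι R '' {y, z}ᶜ)) :
    resolve C E y z f y * resolve C E y z f z = lift R (resolve C E y z f) f := by
  have hC : Set.EqOn (resolve C E y z f) C {y, z}ᶜ := fun i hi =>
    resolve_of_ne (fun h => hi (.inl h)) (fun h => hi (.inr h))
  rw [lift_eq_lift_of_mem_adjoin hC hf, resolve_left, resolve_right hyz]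
  ext u
  simp [Module.End.mul_apply]

lemma coe_resolve_right_apply {M : Type*} [AddCommMonoid M] [Module R M] {V : Submodule R M}
    {T : σ → Module.End R M} {C : σ → Module.End R V} {E : V ≃ₗ[R] V} (hyz : y ≠ z)
    (hT : T y * T z = lift R T f) (hE : ∀ u : V, T y u ∈ V → (E u : M) = T y u) {u : V}
    (hzu : T z u ∈ V) (hyzu : T y (T z u) ∈ V) (hfu : (lift R C f u : M) = lift R T f u) :
    (resolve C E y z f z u : M) = T z u := by
  have hCf : lift R C f u = E ⟨T z u, hzu⟩ := by
    refine Subtype.ext ?_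
    rw [hfu, hE _ hyzu, ← hT, Module.End.mul_apply]
  rw [resolve_right hyz, LinearMap.comp_apply, hCf, LinearEquiv.coe_coe, E.symm_apply_apply]

end Resolution

variable {k M σ : Type*} [Field k] [AddCommGroup M] [Module k M]

theorem exists_finiteDimensional_truncation {T : σ → Module.End k M} {y z : σ} (hyz : y ≠ z)
    {f : FreeAlgebra k σ} (hf : f ∈ Algebra.adjoin k (ι k '' {y, z}ᶜ))
    (hinj : Function.Injective (T y)) (hT : T y * T z = lift k T f)
    {g : FreeAlgebra k σ} {v : M} (hg : lift k T g v ≠ 0) :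
    ∃ (V : Submodule k M) (T' : σ → Module.End k V), FiniteDimensional k V ∧
      T' y * T' z = lift k T' f ∧ lift k T' g ≠ 0 := by
  classical
  choose Af hAf using exists_finset_lift_apply_eq_of_agreesOn T f
  obtain ⟨Ag, hAg⟩ := exists_finset_lift_apply_eq_of_agreesOn T g v
  let A : Finset (σ × M) := Ag ∪ Ag.biUnion fun x => insert (y, T z x.2) (Af x.2)
  let V : Submodule k M := Submodule.span k (insert v (A.image fun x => T x.1 x.2) : Finset M)
  have hv : v ∈ V := Submodule.subset_span (by simp)
  have hV {i : σ} {u : M} (hu : (i, u) ∈ A) : T i u ∈ V :=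
    Submodule.subset_span (Finset.mem_insert_of_mem (Finset.mem_image_of_mem _ hu))
  have hAgA : Ag ⊆ A := Finset.subset_union_left
  have hAfA {x : σ × M} (hx : x ∈ Ag) : insert (y, T z x.2) (Af x.2) ⊆ A :=
    (Finset.subset_biUnion_of_mem (fun x => insert (y, T z x.2) (Af x.2)) hx).trans
      Finset.subset_union_right
  let C : σ → Module.End k V := fun i => compression V (T i)
  have hC : AgreesOn T C A := fun i u hu => coe_compression_apply (hV hu)
  obtain ⟨E, hE⟩ := exists_linearEquiv_coe_apply_eq V hinj
  have hagree : AgreesOn T (resolve C E y z f) Ag := by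
    intro i u hu
    by_cases hy : i = y
    · subst hy
      rw [resolve_left]
      exact hE u (hV (hAgA hu))
    by_cases hz : i = z
    · subst hz
      have hCf : AgreesOn T C (Af u) :=
        hC.mono (Finset.coe_subset.2 ((Finset.subset_insert _ _).trans (hAfA hu)))
      exact coe_resolve_right_apply hyz hT hE (hV (hAgA hu))
        (hV (hAfA hu (Finset.mem_insert_self _ _))) (hAf u V C hCf u rfl)
    · rw [resolve_of_ne hy hz]
      exact hC i u (hAgA hu)
  refine ⟨V, resolve C E y z f, inferInstance, resolve_mul hyz hf, fun h => hg ?_⟩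
  rw [← hAg V _ hagree ⟨v, hv⟩ rfl, h]
  rfl

theorem exists_matrix_lift_ne_zero {y z : σ} (hyz : y ≠ z) {f : FreeAlgebra k σ}
    (hf : f ∈ Algebra.adjoin k (ι k '' {y, z}ᶜ))
    (hfnc : f ∉ Set.range (algebraMap k (FreeAlgebra k σ))) {g : FreeAlgebra k σ}
    (hg : g ∉ TwoSidedIdeal.span {ι k y * ι k z - f}) :
    ∃ (n : ℕ) (X : σ → Matrix (Fin n) (Fin n) k),
      lift k X (ι k y * ι k z - f) = 0 ∧ lift k X g ≠ 0 := by
  classical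
  have hfy : f ∈ Algebra.adjoin k (ι k '' {y}ᶜ) :=
    Algebra.adjoin_mono (Set.image_mono (Set.compl_subset_compl.2 (by simp))) hf
  have hinj : Function.Injective (rewritingAction y z f y) := by
    rw [rewritingAction_self]
    exact rewritingOp_injective hfy hfnc
  obtain ⟨V, T, _, hTf, hTg⟩ := exists_finiteDimensional_truncation hyz hf hinj
    (rewritingAction_mul hyz hfy) (lift_rewritingAction_one_ne_zero hg)
  obtain ⟨X, hX⟩ := exists_matrix_lift_eq_zero_iff T
  refine ⟨_, X, (hX _).2 ?_, mt (hX g).1 hTg⟩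
  rw [map_sub, map_mul, lift_ι_apply, lift_ι_apply, hTf, sub_self]

end Truncation

end NCNullstellensatz

theorem rationally_resolvable_nullstellensatz_general {k σ : Type*} [Field k] {y z : σ}
    (hyz : y ≠ z) {f : FreeAlgebra k σ}
    (hf : f ∈ Algebra.adjoin k (FreeAlgebra.ι k '' {y, z}ᶜ))
    (hfnc : f ∉ Set.range (algebraMap k (FreeAlgebra k σ))) (g : FreeAlgebra k σ) :
    (∀ n : ℕ, 1 ≤ n → ∀ X : σ → Matrix (Fin n) (Fin n) k,
        FreeAlgebra.lift k X (FreeAlgebra.ι k y * FreeAlgebra.ι k z - f) = 0 →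
        FreeAlgebra.lift k X g = 0) ↔
      g ∈ TwoSidedIdeal.span {FreeAlgebra.ι k y * FreeAlgebra.ι k z - f} := by
  refine ⟨fun h => ?_, fun hg n _ X hX =>
    NCNullstellensatz.map_eq_zero_of_mem_span_singleton (FreeAlgebra.lift k X) hX hg⟩
  by_contra hg
  obtain ⟨n, X, hX, hXg⟩ := NCNullstellensatz.exists_matrix_lift_ne_zero hyz hf hfnc hg
  have hn : n ≠ 0 := by
    rintro rfl
    exact hXg (Subsingleton.elim _ _)
  exact hXg (h n (Nat.one_le_iff_ne_zero.2 hn) X hX)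

/-- Klep–Vinnikov–Volčič: for `d ≥ 3` and a nonconstant `f` depending only on
`x_1, …, x_{d-2}`, a polynomial `g` vanishes on the matricial zero set of
`x_{d-1} x_d - f` if and only if `g` lies in the two-sided ideal generated by
`x_{d-1} x_d - f`. -/
theorem rationally_resolvable_nullstellensatz
    (k : Type*) [Field k] [IsAlgClosed k] [CharZero k]
    (d : ℕ) (hd : 3 ≤ d) (f : FreeAlgebra k (Fin d))
    (hf : f ∈ Algebra.adjoin k
      (FreeAlgebra.ι k '' {i : Fin d | (i : ℕ) < d - 2}))
    (hfnc : f ∉ Set.range (algebraMap k (FreeAlgebra k (Fin d))))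
    (g : FreeAlgebra k (Fin d)) :
    (∀ (n : ℕ), 1 ≤ n → ∀ X : Fin d → Matrix (Fin n) (Fin n) k,
        ncEval X (FreeAlgebra.ι k (⟨d - 2, by omega⟩ : Fin d) *
          FreeAlgebra.ι k (⟨d - 1, by omega⟩ : Fin d) - f) = 0 →
        ncEval X g = 0) ↔
      g ∈ TwoSidedIdeal.span
        {FreeAlgebra.ι k (⟨d - 2, by omega⟩ : Fin d) *
          FreeAlgebra.ι k (⟨d - 1, by omega⟩ : Fin d) - f} :=
  rationally_resolvable_nullstellensatz_general (Fin.ne_of_val_ne (by grind))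
    (Algebra.adjoin_mono (Set.image_mono fun i hi => by grind) hf) hfnc g
end

section
/- Let w_1, w_2 be nonempty words (products of variables) in x_1,…,x_d, both different from 1, such that the first letter of w_1 differs from the first letter of w_2, the last letter of w_1 differs from the last letter of w_2, and some variable x_i occurs exactly once in w_1 and does not occur in w_2. Let g ∈ k⟨x_1,…,x_d⟩. Then the following are equivalent: (i) for every n ≥ 1 and every X ∈ M_n(k)^d with w_1(X) − w_2(X) = 0, one has g(X) = 0; (ii) g belongs to the two-sided ideal of k⟨x_1,…,x_d⟩ generated by w_1 − w_2. -/
/-- The element of the free algebra corresponding to a word in the variables. -/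
noncomputable def wordElt {k : Type*} [CommSemiring k] {d : ℕ}
    (w : List (Fin d)) : FreeAlgebra k (Fin d) :=
  (w.map (FreeAlgebra.ι k)).prod

/-!
Let `M = ⟨A | w₁ = w₂⟩`, so that `k⟨A⟩ / (w₁ - w₂)` is the monoid algebra `k[M]`. If
`w₁ = a x b` with `x` occurring neither in `a`, `b` nor in `w₂`, then `x ↦ a⁻¹ w₂ b⁻¹` maps `M` to
the free group on `A`. Once this map is known to be injective, `k[M]` embeds into the group algebra
of a free group, which is separated by finite permutation representations.

Since the first letters differ, `M` is left cancellative: in a chain of rewritings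
`w₁ ↔ w₂` starting at `y u`, whenever the letter `y` is lost at the front and later recovered, the
two rewritings involved can be removed from the chain. The same argument, applied to formal left
quotients of elements of `M` and to the reversed words, whose first letters differ as well, gives a
set `Z ⊇ M` with injective left divisions by the letters such that dividing by `w₁` and by `w₂`
agree on `M`. Extending these divisions to permutations of `Z ⊕ Z` makes the image of `x` in the
free group act on `M` as left multiplication by `x`, so `M` acts through the free group, and
injectively because `m · 1 = m`.
-/

/-- Injective moves on a state space `X`, indexed by letters, together with two words
`word true`, `word false` with different first letters whose actions are to be identified. Only
points that both words send into `live` get their two images identified; on `live` a state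
determines the last letter applied to reach it. -/
structure WordGluing (A X : Type*) where
  move : A → X → X
  live : Set X
  word : Bool → List A
  move_injective (y : A) : Function.Injective (move y)
  move_mem_live (y : A) {z : X} : z ∈ live → move y z ∈ live
  eq_of_move_eq {y y' : A} {z z' : X} : move y z = move y' z' → move y z ∈ live → y = y'
  word_ne_nil (ε : Bool) : word ε ≠ []
  head_word_ne : (word true).head (word_ne_nil true) ≠ (word false).head (word_ne_nil false)

namespace WordGluing

variable {A X : Type*} (G : WordGluing A X)

/-- The action of a word on states, its last letter moving first. -/
abbrev act (u : List A) (z : X) : X := u.foldr G.move z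

/-- The first letter of each of the two glued words. -/
def head (ε : Bool) : A := (G.word ε).head (G.word_ne_nil ε)

/-- What remains of each of the two glued words after its first letter. -/
def tail (ε : Bool) : List A := (G.word ε).tail

/-- One rewriting of one glued word into the other, underneath a common word `u`. -/
def Step (z z' : X) : Prop :=
  ∃ ε u p, (∀ δ, G.act (G.word δ) p ∈ G.live) ∧
    z = G.act u (G.act (G.word ε) p) ∧ z' = G.act u (G.act (G.word !ε) p)

/-- At most `n` consecutive rewritings. -/
inductive Chain : ℕ → X → X → Prop
  | refl (n : ℕ) (z : X) : Chain n z z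
  | tail {n : ℕ} {z v w : X} : Chain n z v → G.Step v w → Chain (n + 1) z w

variable {G}

lemma act_mem_live (u : List A) {z : X} (hz : z ∈ G.live) : G.act u z ∈ G.live := by
  induction u with
  | nil => exact hz
  | cons y u ih => exact G.move_mem_live y ih

lemma act_word (ε : Bool) (p : X) :
    G.act (G.word ε) p = G.move (G.head ε) (G.act (G.tail ε) p) := by
  rw [← List.cons_head_tail (G.word_ne_nil ε)]
  rfl

lemma head_injective : Function.Injective G.head := by
  rintro (_ | _) (_ | _) h
  exacts [rfl, (G.head_word_ne h.symm).elim, (G.head_word_ne h).elim, rfl]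

namespace Step

variable {z z' : X}

lemma symm (h : G.Step z z') : G.Step z' z := by
  obtain ⟨ε, u, p, hp, rfl, rfl⟩ := h
  exact ⟨!ε, u, p, hp, rfl, by rw [Bool.not_not]⟩

lemma move (h : G.Step z z') (y : A) : G.Step (G.move y z) (G.move y z') := by
  obtain ⟨ε, u, p, hp, rfl, rfl⟩ := h
  exact ⟨ε, y :: u, p, hp, rfl, rfl⟩

lemma mem_live (h : G.Step z z') : z ∈ G.live := by
  obtain ⟨ε, u, p, hp, rfl, -⟩ := h
  exact act_mem_live u (hp ε)

lemma of_move {y : A} {ζ w : X} (h : G.Step (G.move y ζ) w) :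
    (∃ ζ', G.Step ζ ζ' ∧ w = G.move y ζ') ∨
      ∃ ε p, y = G.head ε ∧ ζ = G.act (G.tail ε) p ∧ w = G.act (G.word !ε) p ∧ w ∈ G.live := by
  obtain ⟨ε, u, p, hp, hz, rfl⟩ := id h
  rcases u with _ | ⟨y', u⟩
  · replace hz := hz.trans (act_word ε p)
    obtain rfl := G.eq_of_move_eq hz h.mem_live
    exact .inr ⟨ε, p, rfl, G.move_injective _ hz, rfl, hp _⟩
  · obtain rfl : y = y' := G.eq_of_move_eq hz h.mem_live
    exact .inl ⟨_, ⟨ε, u, p, hp, G.move_injective _ hz, rfl⟩, rfl⟩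

end Step

namespace Chain

variable {m n : ℕ} {z v w : X}

lemma mono (h : G.Chain m z w) : ∀ {n}, m ≤ n → G.Chain n z w := by
  induction h with
  | refl => exact fun _ => refl _ _
  | tail _ hs ih =>
    rintro (_ | n) hmn
    · omega
    · exact (ih (by omega)).tail hs

lemma trans (h : G.Chain m z v) (h' : G.Chain n v w) : G.Chain (m + n) z w := by
  induction h' with
  | refl => exact h.mono (by omega)
  | tail _ hs ih => exact (ih h).tail hs

lemma symm (h : G.Chain n z w) : G.Chain n w z := by
  induction h with
  | refl => exact refl _ _
  | tail _ hs ih => exact (((refl 0 _).tail hs.symm).trans ih).mono (by omega)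

lemma move (h : G.Chain n z w) (y : A) : G.Chain n (G.move y z) (G.move y w) := by
  induction h with
  | refl => exact refl _ _
  | tail _ hs ih => exact ih.tail (hs.move y)

lemma act (h : G.Chain n z w) (u : List A) : G.Chain n (G.act u z) (G.act u w) := by
  induction u with
  | nil => exact h
  | cons y _ ih => exact ih.move y

lemma eq_of_notMem_live (h : G.Chain n z w) (hw : w ∉ G.live) : z = w := by
  cases h with
  | refl => rfl
  | tail _ hs => exact absurd hs.symm.mem_live hw

end Chain

variable (G) in
/-- Cancellation of a common first move along chains of length at most `n`, with no increase in
length. -/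
def CancelsAt (n : ℕ) : Prop :=
  ∀ ⦃y p q⦄, G.Chain n (G.move y p) (G.move y q) → G.Chain n p q

lemma CancelsAt.act {n : ℕ} (h : G.CancelsAt n) (u : List A) {p q : X}
    (hc : G.Chain n (G.act u p) (G.act u q)) : G.Chain n p q := by
  induction u with
  | nil => exact hc
  | cons y u ih => exact ih (h hc)

variable (G) in
/-- The form of a state `w` reached from `move y z` by a chain of length at most `n`: either the
first letter is still `y` and all the rewriting went on below it, or the first letter is currently
that of the other glued word. The strict inequality `i + j < n` pays for the rewriting that changed
the first letter. -/
inductive Tracked (y : A) (z : X) (n : ℕ) (w : X) : Prop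
  | same (ζ : X) (hw : w = G.move y ζ) (h : G.Chain n z ζ)
  | switched (ε : Bool) (p ζ : X) (i j : ℕ) (hy : y = G.head ε)
      (hi : G.Chain i z (G.act (G.tail ε) p)) (hj : G.Chain j (G.act (G.tail !ε) p) ζ)
      (hij : i + j < n) (hw : w = G.move (G.head !ε) ζ) (hlive : w ∈ G.live)

lemma Tracked.step {y : A} {z v w : X} {n : ℕ} (hc : ∀ m < n, G.CancelsAt m)
    (h : G.Tracked y z n v) (hs : G.Step v w) : G.Tracked y z (n + 1) w := by
  cases h with
  | same ζ hv h =>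
    subst hv
    obtain ⟨ζ', hs', rfl⟩ | ⟨ε, p, rfl, rfl, rfl, hlive⟩ := hs.of_move
    · exact .same ζ' rfl (h.tail hs')
    · exact .switched ε p _ n 0 rfl h (.refl _ _) (by omega) (act_word _ _) hlive
  | switched ε p ζ i j hy hi hj hij hv hlive =>
    subst hy hv
    obtain ⟨ζ', hs', rfl⟩ | ⟨δ, q, hδ, rfl, rfl, -⟩ := hs.of_move
    · exact .switched ε p ζ' i (j + 1) rfl hi (hj.tail hs') (by omega) rfl hs.symm.mem_live
    · obtain rfl : (!ε) = δ := head_injective hδ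
      have hpq : G.Chain j p q := (hc j (by omega)).act _ hj
      exact .same _ (by rw [Bool.not_not, act_word])
        ((hi.trans (hpq.act (G.tail ε))).mono (by omega))

lemma Chain.tracked {y : A} {z w : X} {n : ℕ} (hc : ∀ m < n, G.CancelsAt m)
    (h : G.Chain n (G.move y z) w) : G.Tracked y z n w := by
  generalize hv : G.move y z = v at h
  induction h with
  | refl n => subst hv; exact .same z rfl (.refl n z)
  | tail _ hs ih =>
    have hc' := fun m hm => hc m (Nat.lt_succ_of_lt hm)
    exact (ih hc' hv).step hc' hs

theorem cancelsAt (n : ℕ) : G.CancelsAt n := by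
  induction n using Nat.strong_induction_on with
  | h n ih =>
    intro y p q h
    cases h.tracked ih with
    | same ζ hw h => exact G.move_injective y hw ▸ h
    | switched ε _ _ _ _ hy _ _ _ hw hlive =>
      have : G.head ε = G.head !ε := hy ▸ G.eq_of_move_eq hw hlive
      exact absurd (head_injective this) (by simp)

variable (G) in
/-- Two states are identified when finitely many rewritings connect them. -/
def setoid : Setoid X where
  r z w := ∃ n, G.Chain n z w
  iseqv :=
    { refl := fun z => ⟨0, .refl 0 z⟩
      symm := fun ⟨n, h⟩ => ⟨n, h.symm⟩
      trans := fun ⟨_, h⟩ ⟨_, h'⟩ => ⟨_, h.trans h'⟩ }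

variable (G) in
/-- The moves induced on the glued state space. -/
def quotientMove (y : A) : Quotient G.setoid → Quotient G.setoid :=
  Quotient.map (G.move y) fun _ _ ⟨n, h⟩ => ⟨n, h.move y⟩

lemma quotientMove_injective (y : A) : Function.Injective (G.quotientMove y) := by
  rintro ⟨p⟩ ⟨q⟩ h
  obtain ⟨n, hn⟩ := Quotient.exact h
  exact Quotient.sound ⟨n, cancelsAt n hn⟩

end WordGluing

/-- The monoid `⟨A | w₁ = w₂⟩`. -/
abbrev OneRelatorMonoid {A : Type*} (w₁ w₂ : List A) : Type _ :=
  PresentedMonoid fun u v : FreeMonoid A => u = .ofList w₁ ∧ v = .ofList w₂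

namespace OneRelatorMonoid

variable {A : Type*} {w₁ w₂ : List A}

/-- The class of a word in `⟨A | w₁ = w₂⟩`. -/
def ofWord (w₁ w₂ u : List A) : OneRelatorMonoid w₁ w₂ :=
  PresentedMonoid.mk _ (.ofList u)

lemma ofWord_surjective : Function.Surjective (ofWord w₁ w₂) := fun m =>
  (PresentedMonoid.surjective_mk m).imp fun _ h => h

lemma ofWord_append (u v : List A) : ofWord w₁ w₂ (u ++ v) = ofWord w₁ w₂ u * ofWord w₁ w₂ v := by
  rw [ofWord, FreeMonoid.ofList_append, map_mul]; rfl

lemma ofWord_left_eq_ofWord_right : ofWord w₁ w₂ w₁ = ofWord w₁ w₂ w₂ :=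
  PresentedMonoid.mk_eq_mk_of_rel ⟨rfl, rfl⟩

end OneRelatorMonoid

namespace WordGluing

open OneRelatorMonoid

variable {A : Type*} {w₁ w₂ : List A}

/-- Letters act on words by prepending, and `w₁`, `w₂` are glued everywhere: the glued state space
is the monoid `⟨A | w₁ = w₂⟩`. -/
def ofRelator (h₁ : w₁ ≠ []) (h₂ : w₂ ≠ []) (hhead : w₁.head h₁ ≠ w₂.head h₂) :
    WordGluing A (List A) where
  move := List.cons
  live := Set.univ
  word ε := cond ε w₁ w₂
  move_injective _ := List.cons_injective
  move_mem_live _ _ _ := Set.mem_univ _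
  eq_of_move_eq h _ := (List.cons.inj h).1
  word_ne_nil := by rintro (_ | _) <;> assumption
  head_word_ne := hhead

variable {h₁ : w₁ ≠ []} {h₂ : w₂ ≠ []} {hhead : w₁.head h₁ ≠ w₂.head h₂}

lemma ofRelator_act (u v : List A) : (ofRelator h₁ h₂ hhead).act u v = u ++ v :=
  List.foldr_cons_eq_append.trans (by rw [List.map_id'])

lemma ofRelator_step_iff {z z' : List A} : (ofRelator h₁ h₂ hhead).Step z z' ↔
    ∃ ε u p, z = u ++ (cond ε w₁ w₂ ++ p) ∧ z' = u ++ (cond (!ε) w₁ w₂ ++ p) := by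
  simp only [Step, ofRelator_act]
  simp [ofRelator]

lemma Step.append_right {z z' : List A} (h : (ofRelator h₁ h₂ hhead).Step z z') (v : List A) :
    (ofRelator h₁ h₂ hhead).Step (z ++ v) (z' ++ v) := by
  obtain ⟨ε, u, p, rfl, rfl⟩ := ofRelator_step_iff.1 h
  exact ofRelator_step_iff.2 ⟨ε, u, p ++ v, by simp only [List.append_assoc, and_self]⟩

lemma Chain.append_right {n : ℕ} {z z' : List A} (h : (ofRelator h₁ h₂ hhead).Chain n z z')
    (v : List A) : (ofRelator h₁ h₂ hhead).Chain n (z ++ v) (z' ++ v) := by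
  induction h with
  | refl => exact .refl _ _
  | tail _ hs ih => exact ih.tail (hs.append_right v)

lemma Step.ofWord_eq {z z' : List A} (h : (ofRelator h₁ h₂ hhead).Step z z') :
    ofWord w₁ w₂ z = ofWord w₁ w₂ z' := by
  obtain ⟨ε, u, p, rfl, rfl⟩ := ofRelator_step_iff.1 h
  have hrel : ofWord w₁ w₂ w₁ = ofWord w₁ w₂ w₂ := ofWord_left_eq_ofWord_right
  cases ε <;> simp [ofWord_append, hrel]

lemma exists_chain_iff {u v : List A} :
    (∃ n, (ofRelator h₁ h₂ hhead).Chain n u v) ↔ ofWord w₁ w₂ u = ofWord w₁ w₂ v := by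
  constructor
  · rintro ⟨n, h⟩
    induction h with
    | refl => rfl
    | tail _ hs ih => exact ih.trans hs.ofWord_eq
  · suffices ∀ u v : FreeMonoid A, ConGen.Rel (fun u v => u = .ofList w₁ ∧ v = .ofList w₂) u v →
        ∃ n, (ofRelator h₁ h₂ hhead).Chain n u.toList v.toList from
      fun h => this _ _ (PresentedMonoid.mk_eq_mk_iff.1 h)
    intro u v h
    induction h with
    | of _ _ h =>
      exact ⟨1, (Chain.refl 0 _).tail
        (ofRelator_step_iff.2 ⟨true, [], [], by simp [h.1], by simp [h.2]⟩)⟩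
    | refl u => exact ⟨0, .refl 0 _⟩
    | symm _ ih => exact ih.imp fun _ => Chain.symm
    | trans _ _ ih ih' =>
      obtain ⟨⟨_, h⟩, _, h'⟩ := And.intro ih ih'
      exact ⟨_, h.trans h'⟩
    | mul _ _ ih ih' =>
      obtain ⟨⟨_, h⟩, _, h'⟩ := And.intro ih ih'
      have := h'.act
      simp only [ofRelator_act] at this
      exact ⟨_, (h.append_right _).trans (this _)⟩

end WordGluing

theorem OneRelatorMonoid.isLeftCancelMul {A : Type*} {w₁ w₂ : List A} (h₁ : w₁ ≠ [])
    (h₂ : w₂ ≠ []) (hhead : w₁.head h₁ ≠ w₂.head h₂) :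
    IsLeftCancelMul (OneRelatorMonoid w₁ w₂) where
  mul_left_cancel a b c h := by
    obtain ⟨a, rfl⟩ := ofWord_surjective a
    obtain ⟨b, rfl⟩ := ofWord_surjective b
    obtain ⟨c, rfl⟩ := ofWord_surjective c
    simp only [← ofWord_append] at h
    obtain ⟨n, hn⟩ := (WordGluing.exists_chain_iff (hhead := hhead)).2 h
    simp only [← WordGluing.ofRelator_act (hhead := hhead)] at hn
    exact WordGluing.exists_chain_iff.1 ⟨n, (WordGluing.cancelsAt n).act a hn⟩

universe u v

section Division

variable {A : Type u} {M : Type v} [Monoid M] (e : A → M)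

open Classical in
/-- Formal left division by `e y`. A state `(m, [y₁, …, yᵣ])` stands for
`(e y₁)⁻¹ ⋯ (e yᵣ)⁻¹ m`; the division is carried out in `M` when no formal inverse is present
and `e y` divides `m`. -/
noncomputable def divMove (y : A) (z : M × List A) : M × List A :=
  if h : z.2 = [] ∧ e y ∣ z.1 then (h.2.choose, []) else (z.1, y :: z.2)

variable {e} {y : A} {z : M × List A}

lemma divMove_of_not (h : ¬(z.2 = [] ∧ e y ∣ z.1)) : divMove e y z = (z.1, y :: z.2) := dif_neg h

lemma divMove_snd_ne_nil (e : A → M) (y : A) (hz : z.2 ≠ []) : (divMove e y z).2 ≠ [] := by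
  rw [divMove_of_not fun h => hz h.1]
  exact List.cons_ne_nil _ _

variable [IsLeftCancelMul M]

lemma divMove_mul (e : A → M) (y : A) (m : M) : divMove e y (e y * m, []) = (m, []) := by
  have h : ([] : List A) = [] ∧ e y ∣ e y * m := ⟨rfl, dvd_mul_right _ _⟩
  exact (dif_pos h).trans (Prod.ext (mul_left_cancel h.2.choose_spec).symm rfl)

lemma divMove_cases (e : A → M) (y : A) (z : M × List A) :
    (∃ m, z = (e y * m, []) ∧ divMove e y z = (m, [])) ∨ divMove e y z = (z.1, y :: z.2) := by
  by_cases h : z.2 = [] ∧ e y ∣ z.1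
  · obtain ⟨m', u⟩ := z
    obtain ⟨rfl : u = [], m, rfl : m' = e y * m⟩ := h
    exact .inl ⟨m, rfl, divMove_mul e y m⟩
  · exact .inr (divMove_of_not h)

lemma divMove_injective (e : A → M) (y : A) : Function.Injective (divMove e y) := by
  intro z z' h
  obtain ⟨m, rfl, hm⟩ | hz := divMove_cases e y z <;>
    obtain ⟨m', rfl, hm'⟩ | hz' := divMove_cases e y z'
  · obtain rfl : m = m' := congrArg Prod.fst (hm.symm.trans (h.trans hm'))
    rfl
  · exact absurd (hm.symm.trans (h.trans hz')) (by simp)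
  · exact absurd (hm'.symm.trans (h.symm.trans hz)) (by simp)
  · simpa [Prod.ext_iff] using hz.symm.trans (h.trans hz')

lemma eq_of_divMove_eq {y' : A} {z' : M × List A} (h : divMove e y z = divMove e y' z')
    (hz : (divMove e y z).2 ≠ []) : y = y' := by
  obtain ⟨m, -, hm⟩ | hy := divMove_cases e y z
  · exact absurd (congrArg Prod.snd hm) hz
  obtain ⟨m', -, hm'⟩ | hy' := divMove_cases e y' z'
  · exact absurd (congrArg Prod.snd (h.trans hm')) hz
  · exact (List.cons.inj (congrArg Prod.snd (hy.symm.trans (h.trans hy')))).1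

namespace WordGluing

variable {w₁ w₂ : List A}

/-- Formal left divisions, with division by `w₁` and by `w₂` glued wherever neither can be carried
out in `M`. Division by a word starts with its first letter, hence the reversal. -/
noncomputable def ofDivision (e : A → M) (h₁ : w₁ ≠ []) (h₂ : w₂ ≠ [])
    (hlast : w₁.getLast h₁ ≠ w₂.getLast h₂) : WordGluing A (M × List A) where
  move := divMove e
  live := {z | z.2 ≠ []}
  word ε := (cond ε w₁ w₂).reverse
  move_injective := divMove_injective e
  move_mem_live y _ := divMove_snd_ne_nil e y
  eq_of_move_eq := eq_of_divMove_eq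
  word_ne_nil := by rintro (_ | _) <;> simpa
  head_word_ne := by simpa only [List.head_reverse, cond_true, cond_false] using hlast

end WordGluing

lemma foldr_reverse_divMove (e : A → M) (w : List A) (m : M) :
    w.reverse.foldr (divMove e) ((w.map e).prod * m, []) = (m, []) := by
  rw [List.foldr_reverse]
  induction w with
  | nil => simp
  | cons y w ih => rw [List.map_cons, List.prod_cons, mul_assoc, List.foldl_cons, divMove_mul, ih]

lemma foldr_reverse_divMove_snd_ne_nil {w : List A} {m : M} (h : ¬(w.map e).prod ∣ m) :
    (w.reverse.foldr (divMove e) (m, [])).2 ≠ [] := by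
  induction w generalizing m with
  | nil => simp at h
  | cons y w ih =>
    rw [List.reverse_cons, List.foldr_append, List.foldr_cons, List.foldr_nil]
    obtain ⟨m', hz, hm'⟩ | hz := divMove_cases e y (m, [])
    · obtain rfl := (Prod.ext_iff.1 hz).1
      rw [hm']
      refine ih fun hdvd => h ?_
      rw [List.map_cons, List.prod_cons]
      exact mul_dvd_mul_left _ hdvd
    · rw [hz]
      generalize w.reverse = u
      induction u with
      | nil => exact List.cons_ne_nil _ _
      | cons y' u ihu => exact divMove_snd_ne_nil e y' ihu

theorem exists_injective_division {w₁ w₂ : List A} (h₁ : w₁ ≠ []) (h₂ : w₂ ≠ [])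
    (hlast : w₁.getLast h₁ ≠ w₂.getLast h₂) (hrel : (w₁.map e).prod = (w₂.map e).prod) :
    ∃ (Z : Type (max u v)) (s : A → Z → Z) (ι : M → Z), (∀ y, (s y).Injective) ∧ ι.Injective ∧
      (∀ y m, s y (ι (e y * m)) = ι m) ∧
      ∀ m, w₁.reverse.foldr s (ι m) = w₂.reverse.foldr s (ι m) := by
  let G := WordGluing.ofDivision e h₁ h₂ hlast
  let ι (m : M) : Quotient G.setoid := ⟦(m, [])⟧
  have hact (u : List A) (z) : u.foldr G.quotientMove ⟦z⟧ = ⟦G.act u z⟧ := by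
    induction u with
    | nil => rfl
    | cons y u ih => rw [List.foldr_cons, ih]; rfl
  refine ⟨_, G.quotientMove, ι, G.quotientMove_injective, fun m m' h => ?_, fun y m => ?_,
    fun m => ?_⟩
  · obtain ⟨n, hn⟩ := Quotient.exact h
    exact congrArg Prod.fst (hn.eq_of_notMem_live (not_not.2 rfl))
  · exact congrArg (Quotient.mk _) (divMove_mul e y m)
  · rw [hact, hact]
    by_cases hm : (w₁.map e).prod ∣ m
    · obtain ⟨m, rfl⟩ := hm
      refine congrArg (Quotient.mk _) ((foldr_reverse_divMove e w₁ m).trans ?_)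
      rw [hrel]
      exact (foldr_reverse_divMove e w₂ m).symm
    · refine Quotient.sound ⟨1, (WordGluing.Chain.refl 0 _).tail ⟨true, [], (m, []), ?_, rfl, rfl⟩⟩
      rintro (_ | _)
      exacts [foldr_reverse_divMove_snd_ne_nil (hrel ▸ hm), foldr_reverse_divMove_snd_ne_nil hm]

end Division

theorem exists_perm_sum_of_biUnique {Z : Type*} {r : Z → Z → Prop} (hr : Relator.BiUnique r) :
    ∃ σ : Equiv.Perm (Z ⊕ Z), ∀ z z', r z z' → σ (.inl z) = .inl z' := by
  classical
  let D : Set Z := {z | ∃ z', r z z'}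
  choose f hf using fun z : D => z.2
  have hf_inj : f.Injective := fun z z' h => Subtype.ext (hr.1 (hf z) (h ▸ hf z'))
  let e : D ≃ Set.range f := Equiv.ofInjective f hf_inj
  let cD := Equiv.Set.sumCompl D
  let cE := Equiv.Set.sumCompl (Set.range f)
  -- `(D ⊕ Dᶜ) ⊕ (E ⊕ Eᶜ) ≃ (D ⊕ E) ⊕ (Dᶜ ⊕ Eᶜ) ≃ (E ⊕ D) ⊕ (Eᶜ ⊕ Dᶜ) ≃ (E ⊕ Eᶜ) ⊕ (D ⊕ Dᶜ)`,
  -- where `E = range f`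
  refine ⟨(cD.symm.sumCongr cE.symm).trans <| (Equiv.sumSumSumComm _ _ _ _).trans <|
    (Equiv.sumCongr (e.sumCongr e.symm) (Equiv.sumComm _ _)).trans <|
    (Equiv.sumSumSumComm _ _ _ _).trans <| cE.sumCongr cD, fun z z' hz => ?_⟩
  have hzD : z ∈ D := ⟨z', hz⟩
  obtain rfl : f ⟨z, hzD⟩ = z' := hr.2 (hf _) hz
  simp [cD, cE, e, Equiv.Set.sumCompl_symm_apply_of_mem hzD]

theorem exists_perm_extending_mul_left {A : Type u} {M : Type v} [Monoid M] [IsLeftCancelMul M]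
    {e : A → M} {w₁ w₂ : List A} (h₁ : w₁ ≠ []) (h₂ : w₂ ≠ [])
    (hlast : w₁.getLast h₁ ≠ w₂.getLast h₂)
    (hrel : (w₁.map e).prod = (w₂.map e).prod) :
    ∃ (Z : Type (max u v)) (σ : A → Equiv.Perm Z) (ι : M → Z), ι.Injective ∧
      (∀ y m, σ y (ι m) = ι (e y * m)) ∧
      ∀ m, (w₁.map σ).prod⁻¹ (ι m) = (w₂.map σ).prod⁻¹ (ι m) := by
  obtain ⟨Z, s, ι, hs, hι, hsι, hglue⟩ := exists_injective_division h₁ h₂ hlast hrel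
  choose τ hτ using fun y : A => exists_perm_sum_of_biUnique
    (r := fun z z' => s y z = z')
    ⟨fun _ _ _ h h' => hs y (h.trans h'.symm), fun _ _ _ h h' => h ▸ h'⟩
  have hτ_foldr (u : List A) (z : Z) : (u.map τ).prod (.inl z) = .inl (u.foldr s z) := by
    induction u with
    | nil => rfl
    | cons y u ih =>
      rw [List.map_cons, List.prod_cons, Equiv.Perm.mul_apply, ih, hτ y _ _ rfl,
        List.foldr_cons]
  have hτ_inv (u : List A) : (u.map fun y => (τ y)⁻¹).prod⁻¹ = (u.reverse.map τ).prod := by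
    rw [List.prod_inv_reverse, List.map_map, List.map_reverse]
    simp [Function.comp_def]
  refine ⟨Z ⊕ Z, fun y => (τ y)⁻¹, .inl ∘ ι, Sum.inl_injective.comp hι, fun y m => ?_, fun m => ?_⟩
  · rw [Equiv.Perm.inv_eq_iff_eq, Function.comp_apply, Function.comp_apply,
      hτ y _ _ rfl, hsι]
  · rw [hτ_inv, hτ_inv, Function.comp_apply, hτ_foldr, hτ_foldr, hglue]

section Embedding

lemma lift_prod_map_of {A H : Type*} [Group H] (f : A → H) (u : List A) :
    FreeGroup.lift f (u.map .of).prod = (u.map f).prod := by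
  simp [map_list_prod, Function.comp_def]

variable {A : Type*} [DecidableEq A]

/-- The substitution in the free group that solves `a x b = c` for `x`. -/
def solveFor (x : A) (a b c : List A) : A → FreeGroup A :=
  Function.update .of x ((a.map .of).prod⁻¹ * (c.map .of).prod * (b.map .of).prod⁻¹)

lemma prod_map_solveFor {x : A} {a b c : List A} (ha : x ∉ a) (hb : x ∉ b) (hc : x ∉ c) :
    ((a ++ x :: b).map (solveFor x a b c)).prod = (c.map (solveFor x a b c)).prod := by
  have hfix {u : List A} (hu : x ∉ u) : u.map (solveFor x a b c) = u.map .of :=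
    List.map_congr_left fun y hy => Function.update_of_ne (ne_of_mem_of_not_mem hy hu) _ _
  rw [List.map_append, List.map_cons, hfix ha, hfix hb, hfix hc, List.prod_append, List.prod_cons,
    solveFor, Function.update_self]
  group

variable {M : Type*} [Monoid M] {e : A → M} {x : A} {a b c : List A}

lemma lift_solveFor_apply {Z : Type*} {σ : A → Equiv.Perm Z} {ι : M → Z}
    (hσ : ∀ y m, σ y (ι m) = ι (e y * m))
    (hglue : ∀ m, ((a ++ x :: b).map σ).prod⁻¹ (ι m) = (c.map σ).prod⁻¹ (ι m)) (y : A) (m : M) :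
    FreeGroup.lift σ (solveFor x a b c y) (ι m) = ι (e y * m) := by
  have hσ_prod (u : List A) (m : M) : (u.map σ).prod (ι m) = ι ((u.map e).prod * m) := by
    induction u with
    | nil => simp
    | cons y u ih =>
      simp only [List.map_cons, List.prod_cons, Equiv.Perm.mul_apply, ih, hσ, mul_assoc]
  by_cases hy : y = x
  · subst hy
    have hdiv : (b.map σ).prod⁻¹ (ι m) = (c.map σ).prod⁻¹ (ι ((a.map e).prod * (e y * m))) := by
      rw [← hglue, ← hσ_prod, ← hσ, ← Equiv.Perm.mul_apply, ← Equiv.Perm.mul_apply,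
        List.map_append, List.prod_append, List.map_cons, List.prod_cons]
      congr 1
      group
    rw [solveFor, Function.update_self]
    simp only [map_mul, map_inv, lift_prod_map_of, Equiv.Perm.mul_apply]
    simp [hdiv, Equiv.symm_apply_eq, hσ_prod]
  · rw [solveFor, Function.update_of_ne hy, FreeGroup.lift_apply_of, hσ]

theorem injective_of_apply_eq_solveFor [IsLeftCancelMul M]
    (he : Submonoid.closure (Set.range e) = ⊤) (hc : c ≠ [])
    (hlast : (a ++ x :: b).getLast (by simp) ≠ c.getLast hc)
    (hrel : ((a ++ x :: b).map e).prod = (c.map e).prod)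
    (φ : M →* FreeGroup A) (hφ : ∀ y, φ (e y) = solveFor x a b c y) : Function.Injective φ := by
  obtain ⟨Z, σ, ι, hι, hσ, hglue⟩ := exists_perm_extending_mul_left (by simp) hc hlast hrel
  have hact (m : M) : ∀ m', FreeGroup.lift σ (φ m) (ι m') = ι (m * m') := by
    induction m using Submonoid.dense_induction _ he with
    | mem m hm =>
      obtain ⟨y, rfl⟩ := hm
      exact fun m' => hφ y ▸ lift_solveFor_apply hσ hglue y m'
    | one => simp
    | mul m₁ m₂ ih₁ ih₂ => simp [ih₁, ih₂, mul_assoc]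
  intro m m' h
  have hm : ι (m * 1) = ι (m' * 1) := by rw [← hact, h, hact]
  simpa only [mul_one] using hι hm

end Embedding

section Separation

variable {A : Type*}

theorem exists_perm_lift_mk_apply (S : Set (FreeGroup A)) :
    ∃ σ : A → Equiv.Perm (S ⊕ S), ∀ (u : List (A × Bool)) (h : ∀ v, v <:+ u → FreeGroup.mk v ∈ S),
      FreeGroup.lift σ (FreeGroup.mk u) (.inl ⟨1, h [] List.nil_suffix⟩) =
        .inl ⟨FreeGroup.mk u, h u List.suffix_rfl⟩ := by
  choose σ hσ using fun y : A => exists_perm_sum_of_biUnique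
    (r := fun z z' : S => .of y * z.1 = z'.1)
    ⟨fun _ _ _ h h' => Subtype.ext (mul_left_cancel (h.trans h'.symm)),
      fun _ _ _ h h' => Subtype.ext (h.symm.trans h')⟩
  refine ⟨σ, fun u h => ?_⟩
  induction u with
  | nil => rfl
  | cons p u ih =>
    obtain ⟨y, ε⟩ := p
    have hcons : FreeGroup.mk ((y, ε) :: u) = FreeGroup.mk [(y, ε)] * FreeGroup.mk u := rfl
    simp only [hcons, map_mul, Equiv.Perm.mul_apply,
      ih fun v hv => h v (hv.trans (List.suffix_cons _ _))]
    cases ε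
    · have hy : (FreeGroup.mk [(y, false)] : FreeGroup A) = (.of y)⁻¹ := rfl
      simp only [hy, map_inv, FreeGroup.lift_apply_of, Equiv.Perm.inv_eq_iff_eq]
      exact (hσ y _ _ (mul_inv_cancel_left _ _)).symm
    · exact hσ y _ _ rfl

theorem exists_perm_hom_injOn (W : Finset (FreeGroup A)) :
    ∃ (n : ℕ) (ρ : FreeGroup A →* Equiv.Perm (Fin n)) (j : Fin n),
      Set.InjOn (fun w => ρ w j) W := by
  classical
  let S : Finset (FreeGroup A) :=
    insert 1 (W.biUnion fun w => (w.toWord.tails.map FreeGroup.mk).toFinset)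
  have hS {w} (hw : w ∈ W) (v : List (A × Bool)) (hv : v <:+ w.toWord) : FreeGroup.mk v ∈ S :=
    Finset.mem_insert_of_mem <| Finset.mem_biUnion.2
      ⟨w, hw, List.mem_toFinset.2 (List.mem_map_of_mem ((List.mem_tails _ _).2 hv))⟩
  obtain ⟨σ, hσ⟩ := exists_perm_lift_mk_apply (S : Set (FreeGroup A))
  let E := Fintype.equivFin (S ⊕ S)
  let base : S ⊕ S := .inl ⟨1, Finset.mem_insert_self _ _⟩
  refine ⟨_, E.permCongrHom.toMonoidHom.comp (FreeGroup.lift σ), E base, fun w hw w' hw' h => ?_⟩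
  have hbase {w} (hw : w ∈ W) : ∃ hwS, FreeGroup.lift σ w base = .inl ⟨w, hwS⟩ := by
    have hword := hσ w.toWord (hS hw)
    simp only [FreeGroup.mk_toWord] at hword
    exact ⟨_, hword⟩
  obtain ⟨_, hbase_w⟩ := hbase hw
  obtain ⟨_, hbase_w'⟩ := hbase hw'
  simpa [hbase_w, hbase_w'] using h

end Separation

section MatrixRepresentations

variable {k A : Type*}

theorem exists_matrix_rep_ne_zero [CommSemiring k]
    {f : MonoidAlgebra k (FreeGroup A)} (hf : f ≠ 0) :
    ∃ (n : ℕ) (Θ : MonoidAlgebra k (FreeGroup A) →ₐ[k] Matrix (Fin n) (Fin n) k), Θ f ≠ 0 := by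
  obtain ⟨w, hw⟩ : ∃ w, f.coeff w ≠ 0 := by
    by_contra! h
    exact hf (by ext w; simp [h])
  obtain ⟨n, ρ, j, hρ⟩ := exists_perm_hom_injOn f.coeff.support
  let Θ := MonoidAlgebra.lift k _ _ ((Matrix.permMatrixHom (R := k)).comp ρ)
  have hΘ : Θ f (ρ w j) j = f.coeff w := by
    rw [MonoidAlgebra.lift_apply, Finsupp.sum, Matrix.sum_apply, Finset.sum_eq_single w]
    · simp [Matrix.permMatrixHom_apply, PEquiv.toMatrix_apply]
    · intro v hv hvw
      have hne : ρ v j ≠ ρ w j := fun h => hvw (hρ hv (Finsupp.mem_support_iff.2 hw) h)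
      simp [Matrix.permMatrixHom_apply, PEquiv.toMatrix_apply, Equiv.symm_apply_eq, hne.symm]
    · intro h
      simp [Finsupp.notMem_support_iff.1 h]
  exact ⟨n, Θ, fun h => hw (by rw [← hΘ, h, Matrix.zero_apply])⟩

end MatrixRepresentations

namespace OneRelatorMonoid

variable {A : Type*} {w₁ w₂ : List A}

lemma prod_map_of (u : List A) :
    (u.map fun y => (PresentedMonoid.of _ y : OneRelatorMonoid w₁ w₂)).prod = ofWord w₁ w₂ u := by
  induction u with
  | nil => rfl
  | cons y u ih => rw [List.map_cons, List.prod_cons, ih]; rfl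

theorem exists_injective_hom_freeGroup [DecidableEq A] (h₁ : w₁ ≠ []) (h₂ : w₂ ≠ [])
    (hhead : w₁.head h₁ ≠ w₂.head h₂) (hlast : w₁.getLast h₁ ≠ w₂.getLast h₂)
    {x : A} (hx₁ : w₁.count x = 1) (hx₂ : w₂.count x = 0) :
    ∃ φ : OneRelatorMonoid w₁ w₂ →* FreeGroup A, Function.Injective φ := by
  obtain ⟨a, b, rfl⟩ := List.append_of_mem (List.count_pos_iff.1 (hx₁ ▸ Nat.one_pos))
  rw [List.count_append, List.count_cons_self] at hx₁
  have ha : x ∉ a := List.count_eq_zero.1 (by omega)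
  have hb : x ∉ b := List.count_eq_zero.1 (by omega)
  let φ : OneRelatorMonoid (a ++ x :: b) w₂ →* FreeGroup A :=
    PresentedMonoid.lift (solveFor x a b w₂) (by
      rintro u v ⟨hu, hv⟩
      rw [hu, hv, FreeMonoid.lift_ofList, FreeMonoid.lift_ofList]
      exact prod_map_solveFor ha hb (List.count_eq_zero.1 hx₂))
  have := isLeftCancelMul h₁ h₂ hhead
  refine ⟨φ, injective_of_apply_eq_solveFor (PresentedMonoid.closure_range_of _) h₂ hlast ?_ φ
    fun y => rfl⟩
  rw [prod_map_of, prod_map_of, ofWord_left_eq_ofWord_right]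

/-- The canonical map of the free algebra onto the monoid algebra of `⟨A | w₁ = w₂⟩`. -/
noncomputable def freeAlgebraHom (k : Type*) [CommSemiring k] (w₁ w₂ : List A) :
    FreeAlgebra k A →ₐ[k] MonoidAlgebra k (OneRelatorMonoid w₁ w₂) :=
  FreeAlgebra.lift k fun y => MonoidAlgebra.of k _ (PresentedMonoid.of _ y)

lemma freeAlgebraHom_prod_map_ι {k : Type*} [CommSemiring k] (u : List A) :
    freeAlgebraHom k w₁ w₂ (u.map (FreeAlgebra.ι k)).prod =
      MonoidAlgebra.of k _ (ofWord w₁ w₂ u) := by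
  rw [← prod_map_of, map_list_prod, map_list_prod, List.map_map, List.map_map]
  congr 1
  exact List.map_congr_left fun y _ => FreeAlgebra.lift_ι_apply _ y

theorem freeAlgebraHom_eq_zero_iff {k : Type*} [CommRing k] {g : FreeAlgebra k A} :
    freeAlgebraHom k w₁ w₂ g = 0 ↔ g ∈ TwoSidedIdeal.span
      {(w₁.map (FreeAlgebra.ι k)).prod - (w₂.map (FreeAlgebra.ι k)).prod} := by
  set I := TwoSidedIdeal.span {(w₁.map (FreeAlgebra.ι k)).prod - (w₂.map (FreeAlgebra.ι k)).prod}
  constructor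
  · intro hg
    let q := I.ringCon.mkₐ (α := k)
    have hrel : q (w₁.map (FreeAlgebra.ι k)).prod = q (w₂.map (FreeAlgebra.ι k)).prod :=
      I.ringCon.eq.2 ((I.rel_iff _ _).2 (TwoSidedIdeal.subset_span rfl))
    let F : OneRelatorMonoid w₁ w₂ →* I.ringCon.Quotient :=
      PresentedMonoid.lift (fun y => q (FreeAlgebra.ι k y)) (by
        rintro u v ⟨hu, hv⟩
        rw [map_list_prod, map_list_prod, List.map_map, List.map_map] at hrel
        rw [hu, hv, FreeMonoid.lift_ofList, FreeMonoid.lift_ofList]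
        exact hrel)
    have hF : (MonoidAlgebra.lift k _ _ F).comp (freeAlgebraHom k w₁ w₂) = q := by
      ext y
      simp [F, freeAlgebraHom]
    have hq : q g = 0 := by rw [← hF, AlgHom.comp_apply, hg, map_zero]
    exact (I.mem_iff g).2 (I.ringCon.eq.1 hq)
  · suffices I ≤ TwoSidedIdeal.ker (freeAlgebraHom k w₁ w₂) from
      fun hg => (TwoSidedIdeal.mem_ker _).1 (this hg)
    refine TwoSidedIdeal.span_le.2 (Set.singleton_subset_iff.2 ?_)
    rw [SetLike.mem_coe, TwoSidedIdeal.mem_ker, map_sub, freeAlgebraHom_prod_map_ι,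
      freeAlgebraHom_prod_map_ι, ofWord_left_eq_ofWord_right, sub_self]

theorem freeAlgebraHom_eq_zero_of_forall_matrix {B k : Type*} [CommRing k]
    {φ : OneRelatorMonoid w₁ w₂ →* FreeGroup B} (hφ : Function.Injective φ) {g : FreeAlgebra k A}
    (hg : ∀ n, 1 ≤ n → ∀ X : A → Matrix (Fin n) (Fin n) k,
      FreeAlgebra.lift k X ((w₁.map (FreeAlgebra.ι k)).prod - (w₂.map (FreeAlgebra.ι k)).prod) = 0 →
        FreeAlgebra.lift k X g = 0) :
    freeAlgebraHom k w₁ w₂ g = 0 := by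
  by_contra hne
  let Ψ := MonoidAlgebra.mapDomainAlgHom k k φ
  have hΨ : Ψ (freeAlgebraHom k w₁ w₂ g) ≠ 0 := fun h =>
    hne (MonoidAlgebra.mapDomain_injective hφ (h.trans (map_zero Ψ).symm))
  obtain ⟨n, Θ, hΘ⟩ := exists_matrix_rep_ne_zero hΨ
  let X y := Θ (Ψ (freeAlgebraHom k w₁ w₂ (FreeAlgebra.ι k y)))
  have hX : FreeAlgebra.lift k X = (Θ.comp Ψ).comp (freeAlgebraHom k w₁ w₂) :=
    FreeAlgebra.hom_ext (FreeAlgebra.ι_comp_lift X)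
  have hn : n ≠ 0 := by
    rintro rfl
    exact hΘ (Subsingleton.elim _ _)
  have hzero := hg n (Nat.one_le_iff_ne_zero.2 hn) X (by
    rw [hX, AlgHom.comp_apply, freeAlgebraHom_eq_zero_iff.2 (TwoSidedIdeal.subset_span rfl),
      map_zero])
  rw [hX] at hzero
  exact hΘ hzero

end OneRelatorMonoid

theorem binomial_nullstellensatz_general {k A : Type*} [CommRing k] [DecidableEq A]
    {w₁ w₂ : List A} (hne₁ : w₁ ≠ []) (hne₂ : w₂ ≠ []) (hhead : w₁.head hne₁ ≠ w₂.head hne₂)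
    (hlast : w₁.getLast hne₁ ≠ w₂.getLast hne₂)
    (hvar : ∃ i, w₁.count i = 1 ∧ w₂.count i = 0) (g : FreeAlgebra k A) :
    (∀ n, 1 ≤ n → ∀ X : A → Matrix (Fin n) (Fin n) k,
        FreeAlgebra.lift k X
          ((w₁.map (FreeAlgebra.ι k)).prod - (w₂.map (FreeAlgebra.ι k)).prod) = 0 →
        FreeAlgebra.lift k X g = 0) ↔
      g ∈ TwoSidedIdeal.span
        {(w₁.map (FreeAlgebra.ι k)).prod - (w₂.map (FreeAlgebra.ι k)).prod} := by
  constructor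
  · intro hg
    obtain ⟨x, hx₁, hx₂⟩ := hvar
    obtain ⟨φ, hφ⟩ :=
      OneRelatorMonoid.exists_injective_hom_freeGroup hne₁ hne₂ hhead hlast hx₁ hx₂
    exact OneRelatorMonoid.freeAlgebraHom_eq_zero_iff.1
      (OneRelatorMonoid.freeAlgebraHom_eq_zero_of_forall_matrix hφ hg)
  · intro hg n _ X hX
    have hle := TwoSidedIdeal.span_le (I := TwoSidedIdeal.ker (FreeAlgebra.lift k X)).2
      (Set.singleton_subset_iff.2 ((TwoSidedIdeal.mem_ker _).2 hX))
    exact (TwoSidedIdeal.mem_ker _).1 (hle hg)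

/-- Klep–Vinnikov–Volčič: let `w_1, w_2` be nonempty words with different first
letters and different last letters, such that some variable occurs exactly once
in `w_1` and not at all in `w_2`.  Then `g` vanishes on the matricial zero set of
`w_1 - w_2` if and only if `g` lies in the two-sided ideal generated by `w_1 - w_2`. -/
theorem binomial_nullstellensatz
    (k : Type*) [Field k] [IsAlgClosed k] [CharZero k]
    (d : ℕ) (hd : 1 ≤ d) (w₁ w₂ : List (Fin d))
    (hne₁ : w₁ ≠ []) (hne₂ : w₂ ≠ [])
    (hhead : w₁.head hne₁ ≠ w₂.head hne₂)
    (hlast : w₁.getLast hne₁ ≠ w₂.getLast hne₂)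
    (hvar : ∃ i : Fin d, w₁.count i = 1 ∧ w₂.count i = 0)
    (g : FreeAlgebra k (Fin d)) :
    (∀ (n : ℕ), 1 ≤ n → ∀ X : Fin d → Matrix (Fin n) (Fin n) k,
        ncEval X (wordElt w₁ - wordElt w₂) = 0 → ncEval X g = 0) ↔
      g ∈ TwoSidedIdeal.span {(wordElt w₁ - wordElt w₂ : FreeAlgebra k (Fin d))} := by
  exact binomial_nullstellensatz_general hne₁ hne₂ hhead hlast hvar g
end

section
/- Let f_1,…,f_ℓ, g ∈ k⟨x_1,…,x_d⟩. Then the following are equivalent: (i) for every n ≥ 1, every X ∈ M_n(k)^d and every vector v ∈ k^n, if f_j(X)v = 0 for all j = 1,…,ℓ then g(X)v = 0; (ii) g belongs to the left ideal of k⟨x_1,…,x_d⟩ generated by f_1,…,f_ℓ. -/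
/-!
A left ideal `I` is the annihilator of the class `m` of `1` in the left module `F ⧸ I` over the
free algebra `F`. This module is usually infinite-dimensional, but computing `p • m` letter by
letter visits only finitely many vectors. Cut the action of the variables down to a
finite-dimensional subspace containing the vectors visited by `g` and by the `f j`, composing
each variable with a linear projection onto it: since the variables are free, these compressions
form an admissible tuple of matrices, and at it every `f j`, and hence `g`, acts on `m` as it
does in `F ⧸ I`.
-/

open Matrix

section Compression

variable {R σ M : Type*} [CommSemiring R] [AddCommMonoid M] [Module R M]
  [Module (FreeAlgebra R σ) M] [IsScalarTower R (FreeAlgebra R σ) M]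

/-- The compressions to a submodule `V` of the actions of the variables on `M`. The map `P` is
meant to be a projection onto `V`; it is left arbitrary, because a computation only needs it to
fix the vectors that occur in it. -/
def compression {V : Submodule R M} (P : M →ₗ[R] V) (x : σ) : Module.End R V :=
  P ∘ₗ Algebra.lsmul R R M (FreeAlgebra.ι R x) ∘ₗ V.subtype

theorem compression_apply {V : Submodule R M} (P : M →ₗ[R] V) (x : σ) (v : V) :
    compression P x v = P (FreeAlgebra.ι R x • (v : M)) :=
  rfl

theorem exists_finite_lift_compression_apply (p : FreeAlgebra R σ) (m : M) :
    ∃ s : Set M, s.Finite ∧ ∀ (V : Submodule R M) (P : M →ₗ[R] V), (∀ w ∈ s, (P w : M) = w) →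
      FreeAlgebra.lift R (compression P) p (P m) = P (p • m) := by
  induction p using FreeAlgebra.induction generalizing m with
  | grade0 r => exact ⟨∅, Set.finite_empty, fun V P _ ↦ by simp⟩
  | grade1 x =>
    refine ⟨{m}, Set.finite_singleton m, fun V P hP ↦ ?_⟩
    rw [FreeAlgebra.lift_ι_apply, compression_apply, hP m rfl]
  | mul a b iha ihb =>
    obtain ⟨s, hs, hb⟩ := ihb m
    obtain ⟨t, ht, ha⟩ := iha (b • m)
    refine ⟨s ∪ t, hs.union ht, fun V P hP ↦ ?_⟩
    rw [map_mul, Module.End.mul_apply, hb V P fun w hw ↦ hP w (.inl hw),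
      ha V P fun w hw ↦ hP w (.inr hw), mul_smul]
  | add a b iha ihb =>
    obtain ⟨s, hs, ha⟩ := iha m
    obtain ⟨t, ht, hb⟩ := ihb m
    refine ⟨s ∪ t, hs.union ht, fun V P hP ↦ ?_⟩
    rw [map_add, LinearMap.add_apply, ha V P fun w hw ↦ hP w (.inl hw),
      hb V P fun w hw ↦ hP w (.inr hw), add_smul, map_add]

end Compression

theorem lift_toMatrix_mulVec_repr {R σ ι V : Type*} [CommSemiring R] [AddCommMonoid V]
    [Module R V] [Fintype ι] [DecidableEq ι] (b : Module.Basis ι R V)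
    (T : σ → Module.End R V) (p : FreeAlgebra R σ) (v : V) :
    FreeAlgebra.lift R (fun x ↦ LinearMap.toMatrix b b (T x)) p *ᵥ b.repr v =
      b.repr (FreeAlgebra.lift R T p v) := by
  have lift_toMatrix : FreeAlgebra.lift R (fun x ↦ LinearMap.toMatrix b b (T x)) =
      (LinearMap.toMatrixAlgEquiv b).toAlgHom.comp (FreeAlgebra.lift R T) := by
    ext x : 2
    simp [LinearMap.toMatrixAlgEquiv]
  rw [lift_toMatrix]
  exact LinearMap.toMatrix_mulVec_repr b b _ v

section Field

variable {k σ M : Type*} [Field k] [AddCommGroup M] [Module k M]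
  [Module (FreeAlgebra k σ) M] [IsScalarTower k (FreeAlgebra k σ) M]

theorem exists_finiteDimensional_lift_apply_eq_smul {S : Set (FreeAlgebra k σ)} (hS : S.Finite)
    (m : M) :
    ∃ (V : Submodule k M) (T : σ → Module.End k V) (v : V), FiniteDimensional k V ∧
      ∀ p ∈ S, (FreeAlgebra.lift k T p v : M) = p • m := by
  choose visited visited_finite hvisited using
    fun p : FreeAlgebra k σ ↦ exists_finite_lift_compression_apply p m
  let B : Set M := ⋃ p ∈ S, insert (p • m) (visited p)
  have hB : B.Finite := hS.biUnion fun p _ ↦ (visited_finite p).insert _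
  obtain ⟨P, hP⟩ := (Submodule.span k B).subtype.exists_leftInverse_of_injective
    (Submodule.ker_subtype _)
  have P_fixes : ∀ w ∈ B, (P w : M) = w := fun w hw ↦
    congrArg Subtype.val (LinearMap.congr_fun hP ⟨w, Submodule.subset_span hw⟩)
  refine ⟨_, compression P, P m, FiniteDimensional.span_of_finite k hB, fun p hp ↦ ?_⟩
  have hpB : insert (p • m) (visited p) ⊆ B :=
    Set.subset_biUnion_of_mem (u := fun p ↦ insert (p • m) (visited p)) hp
  rw [hvisited p _ P fun w hw ↦ P_fixes w (hpB (.inr hw)), P_fixes _ (hpB (.inl rfl))]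

theorem exists_matrix_lift_mulVec_eq_zero_iff {S : Set (FreeAlgebra k σ)} (hS : S.Finite)
    (m : M) :
    ∃ (n : ℕ) (X : σ → Matrix (Fin n) (Fin n) k) (v : Fin n → k),
      ∀ p ∈ S, FreeAlgebra.lift k X p *ᵥ v = 0 ↔ p • m = 0 := by
  obtain ⟨V, T, v, _, hT⟩ := exists_finiteDimensional_lift_apply_eq_smul hS m
  let b := Module.finBasis k V
  refine ⟨_, fun x ↦ LinearMap.toMatrix b b (T x), b.repr v, fun p hp ↦ ?_⟩
  rw [lift_toMatrix_mulVec_repr, ← hT p hp, Submodule.coe_eq_zero, ← Finsupp.coe_zero,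
    DFunLike.coe_fn_eq, b.repr.map_eq_zero_iff]

end Field

theorem smul_mkQ_one_eq_zero_iff {A : Type*} [Ring A] (I : Submodule A A) (a : A) :
    a • I.mkQ 1 = 0 ↔ a ∈ I := by
  rw [← map_smul, smul_eq_mul, mul_one, Submodule.mkQ_apply, Submodule.Quotient.mk_eq_zero]

theorem mulVec_eq_zero_of_mem_span {A R n F : Type*} [Semiring A] [Semiring R] [Fintype n]
    [DecidableEq n] [FunLike F A (Matrix n n R)] [RingHomClass F A (Matrix n n R)] (φ : F)
    {v : n → R} {s : Set A} (hs : ∀ a ∈ s, φ a *ᵥ v = 0) {a : A} (ha : a ∈ Ideal.span s) :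
    φ a *ᵥ v = 0 := by
  induction ha using Submodule.span_induction with
  | mem a ha => exact hs a ha
  | zero => rw [map_zero, zero_mulVec]
  | add a b _ _ iha ihb => rw [map_add, add_mulVec, iha, ihb, add_zero]
  | smul c a _ iha => rw [smul_eq_mul, map_mul, ← mulVec_mulVec, iha, mulVec_zero]

theorem bergman_nullstellensatz_general {k σ ι : Type*} [Field k] [Finite ι]
    (f : ι → FreeAlgebra k σ) (g : FreeAlgebra k σ) :
    (∀ n : ℕ, 1 ≤ n → ∀ (X : σ → Matrix (Fin n) (Fin n) k) (v : Fin n → k),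
        (∀ j, FreeAlgebra.lift k X (f j) *ᵥ v = 0) → FreeAlgebra.lift k X g *ᵥ v = 0) ↔
      g ∈ Ideal.span (Set.range f) := by
  constructor
  · intro h
    let I : Submodule (FreeAlgebra k σ) (FreeAlgebra k σ) := Ideal.span (Set.range f)
    obtain ⟨n, X, v, hX⟩ := exists_matrix_lift_mulVec_eq_zero_iff
      ((Set.finite_range f).insert g) (I.mkQ 1)
    simp only [smul_mkQ_one_eq_zero_iff] at hX
    have f_vanishes (j : ι) : FreeAlgebra.lift k X (f j) *ᵥ v = 0 :=
      (hX _ (.inr ⟨j, rfl⟩)).2 (Ideal.subset_span ⟨j, rfl⟩)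
    refine (hX g (.inl rfl)).1 ?_
    obtain rfl | hn := n.eq_zero_or_pos
    · exact Subsingleton.elim _ _
    · exact h n hn X v f_vanishes
  · exact fun hg _ _ X v hf ↦ mulVec_eq_zero_of_mem_span (FreeAlgebra.lift k X)
      (Set.forall_mem_range.2 hf) hg

/-- Bergman's Nullstellensatz: `g` vanishes on all directional zeros of
`f_1, …, f_ℓ` if and only if `g` lies in the left ideal generated by `f_1, …, f_ℓ`. -/
theorem bergman_nullstellensatz
    (k : Type*) [Field k] [IsAlgClosed k] [CharZero k]
    (d ℓ : ℕ) (hd : 1 ≤ d)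
    (f : Fin ℓ → FreeAlgebra k (Fin d)) (g : FreeAlgebra k (Fin d)) :
    (∀ (n : ℕ), 1 ≤ n → ∀ X : Fin d → Matrix (Fin n) (Fin n) k,
        ∀ v : Fin n → k,
        (∀ j, (ncEval X (f j)).mulVec v = 0) → (ncEval X g).mulVec v = 0) ↔
      g ∈ Ideal.span (Set.range f) :=
  bergman_nullstellensatz_general f g
end
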